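/- arXiv:1712.08255 — 3 statements merged into one kernel-verified Lean document; each statement's English description precedes it below -/
import Mathlib

section
/- Let p ∈ (1,∞), p ≠ 2. Then: (i) for every ε > 0 and every C ≥ 1, every locally finite metric space all of whose finite subsets admit C-bilipschitz embeddings into ℓ_p admits a ((1+ε)·C)-bilipschitz embedding into ℓ_p; and (ii) there exists a locally finite metric space M whose finite subsets all admit isometric embeddings into ℓ_p but which admits no isometric embedding into ℓ_p. -/
open scoped ENNReal

/-- A metric space is locally finite if every closed ball of finite radius is finite. -/
def MetricLocallyFinite (A : Type*) [MetricSpace A] : Prop :=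
  ∀ (x : A) (R : ℝ), (Metric.closedBall x R).Finite

/-- `f` is a `C`-bilipschitz embedding: there is `r > 0` with
`r * d(u,v) ≤ d(f u, f v) ≤ r * C * d(u,v)` for all `u, v`. -/
def IsBilipschitzEmbedding {A Y : Type*} [MetricSpace A] [MetricSpace Y]
    (C : ℝ) (f : A → Y) : Prop :=
  ∃ r : ℝ, 0 < r ∧ ∀ u v : A,
    r * dist u v ≤ dist (f u) (f v) ∧ dist (f u) (f v) ≤ r * C * dist u v


lemma aux_super {r x y : ℝ} (hr : 1 < r) (hx : 0 < x) (hy : 0 < y) :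
    x ^ r + y ^ r < (x + y) ^ r := by
  have h : ∀ z : ℝ, 0 < z → z ^ r = z * z ^ (r - 1) := by
    intro z hz
    rw [← Real.rpow_one_add' hz.le (by linarith)]; congr 1; ring
  rw [h x hx, h y hy, h (x + y) (by linarith)]
  have h1 : x ^ (r - 1) < (x + y) ^ (r - 1) :=
    Real.rpow_lt_rpow hx.le (by linarith) (by linarith)
  have h2 : y ^ (r - 1) < (x + y) ^ (r - 1) :=
    Real.rpow_lt_rpow hy.le (by linarith) (by linarith)
  nlinarith

lemma aux_sub {r x y : ℝ} (hr0 : 0 < r) (hr : r < 1) (hx : 0 < x) (hy : 0 < y) :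
    (x + y) ^ r < x ^ r + y ^ r := by
  have h : ∀ z : ℝ, 0 < z → z ^ r = z * z ^ (r - 1) := by
    intro z hz
    rw [← Real.rpow_one_add' hz.le (by linarith)]; congr 1; ring
  rw [h x hx, h y hy, h (x + y) (by linarith)]
  have h1 : (x + y) ^ (r - 1) < x ^ (r - 1) :=
    Real.rpow_lt_rpow_of_neg hx (by linarith) (by linarith)
  have h2 : (x + y) ^ (r - 1) < y ^ (r - 1) :=
    Real.rpow_lt_rpow_of_neg hy (by linarith) (by linarith)
  nlinarith

lemma aux_sq (q a : ℝ) : |a| ^ q = (a ^ 2) ^ (q / 2) := by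
  rw [← sq_abs, ← Real.rpow_natCast, ← Real.rpow_mul (abs_nonneg a)]
  congr 1; push_cast; ring

lemma clarkson_gt {q a b : ℝ} (hq : 2 < q) (ha : a ≠ 0) (hb : b ≠ 0) :
    2 * (|a| ^ q + |b| ^ q) < |a + b| ^ q + |a - b| ^ q := by
  rw [aux_sq q a, aux_sq q b, aux_sq q (a + b), aux_sq q (a - b)]
  have h1 := aux_super (r := q / 2) (by linarith) (pow_pos (abs_pos.2 ha) 2) (pow_pos (abs_pos.2 hb) 2)
  rw [sq_abs, sq_abs] at h1
  have h2 := (convexOn_rpow (p := q / 2) (by linarith)).2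
    (Set.mem_Ici.2 (sq_nonneg (a + b))) (Set.mem_Ici.2 (sq_nonneg (a - b)))
    (show (0 : ℝ) ≤ 1 / 2 by norm_num) (show (0 : ℝ) ≤ 1 / 2 by norm_num) (by norm_num)
  simp only [smul_eq_mul] at h2
  rw [show (1 / 2 : ℝ) * (a + b) ^ 2 + 1 / 2 * (a - b) ^ 2 = a ^ 2 + b ^ 2 by ring] at h2
  linarith

lemma clarkson_lt {q a b : ℝ} (hq0 : 0 < q) (hq : q < 2) (ha : a ≠ 0) (hb : b ≠ 0) :
    |a + b| ^ q + |a - b| ^ q < 2 * (|a| ^ q + |b| ^ q) := by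
  rw [aux_sq q a, aux_sq q b, aux_sq q (a + b), aux_sq q (a - b)]
  have h1 := aux_sub (r := q / 2) (by linarith) (by linarith)
    (pow_pos (abs_pos.2 ha) 2) (pow_pos (abs_pos.2 hb) 2)
  rw [sq_abs, sq_abs] at h1
  have h2 := (Real.concaveOn_rpow (p := q / 2) (by linarith) (by linarith)).2
    (Set.mem_Ici.2 (sq_nonneg (a + b))) (Set.mem_Ici.2 (sq_nonneg (a - b)))
    (show (0 : ℝ) ≤ 1 / 2 by norm_num) (show (0 : ℝ) ≤ 1 / 2 by norm_num) (by norm_num)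
  simp only [smul_eq_mul] at h2
  rw [show (1 / 2 : ℝ) * (a + b) ^ 2 + 1 / 2 * (a - b) ^ 2 = a ^ 2 + b ^ 2 by ring] at h2
  linarith

lemma clarkson_eq {q a b : ℝ} (hq0 : 0 < q) (h : a = 0 ∨ b = 0) :
    |a + b| ^ q + |a - b| ^ q = 2 * (|a| ^ q + |b| ^ q) := by
  rcases h with rfl | rfl <;> simp [Real.zero_rpow hq0.ne'] <;> ring

lemma mid_lt {q a b : ℝ} (hq : 1 < q) (hab : a ≠ b) :
    |a + b| ^ q < 2 ^ (q - 1) * (|a| ^ q + |b| ^ q) := by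
  have h3 : (2 : ℝ) ^ q = 2 * 2 ^ (q - 1) := by
    rw [← Real.rpow_one_add' (by norm_num) (by linarith)]; congr 1; ring
  have hpos : (0 : ℝ) < 2 ^ q := by positivity
  by_cases h : |a| = |b|
  · have hb : a = -b := by
      rcases abs_eq_abs.1 h with h | h
      · exact absurd h hab
      · exact h
    have : b ≠ 0 := by rintro rfl; simp at hb; exact hab hb
    have hb' := abs_pos.2 this
    subst hb
    rw [neg_add_cancel, abs_zero, Real.zero_rpow (by linarith)]
    positivity
  · have h2 := (strictConvexOn_rpow hq).2
      (Set.mem_Ici.2 (abs_nonneg a)) (Set.mem_Ici.2 (abs_nonneg b)) h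
      (show (0 : ℝ) < 1 / 2 by norm_num) (show (0 : ℝ) < 1 / 2 by norm_num) (by norm_num)
    simp only [smul_eq_mul] at h2
    have h1 : |a + b| ^ q ≤ (2 * (1 / 2 * |a| + 1 / 2 * |b|)) ^ q := by
      apply Real.rpow_le_rpow (abs_nonneg _) _ (by linarith)
      have := abs_add_le a b
      linarith
    rw [Real.mul_rpow (by norm_num) (by positivity)] at h1
    have h4 := mul_lt_mul_of_pos_left h2 hpos
    calc _ ≤ _ := h1
      _ < _ := h4
      _ = _ := by rw [h3]; ring

section
variable {p : ℝ≥0∞} [Fact (1 ≤ p)]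

lemma lp_disj (hp1 : 1 < p) (hptop : p ≠ ∞) (hp2 : p ≠ 2) (X Y : lp (fun _ : ℕ => ℝ) p)
    (h1 : ‖X + Y‖ ^ p.toReal = ‖X‖ ^ p.toReal + ‖Y‖ ^ p.toReal)
    (h2 : ‖X - Y‖ ^ p.toReal = ‖X‖ ^ p.toReal + ‖Y‖ ^ p.toReal) (k : ℕ) :
    X k = 0 ∨ Y k = 0 := by
  have hq : 1 < p.toReal := by
    rw [← ENNReal.toReal_one]; exact (ENNReal.toReal_lt_toReal (by simp) hptop).2 hp1
  have hq2 : p.toReal ≠ 2 := by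
    intro h; apply hp2; rw [← ENNReal.ofReal_toReal hptop, h]; simp
  set q := p.toReal with hqd
  have hq0 : 0 < p.toReal := by linarith
  have sX := lp.hasSum_norm hq0 X
  have sY := lp.hasSum_norm hq0 Y
  have sP := lp.hasSum_norm hq0 (X + Y)
  have sM := lp.hasSum_norm hq0 (X - Y)
  simp only [lp.coeFn_add, lp.coeFn_sub, Pi.add_apply, Pi.sub_apply, Real.norm_eq_abs] at sX sY sP sM
  rw [← hqd] at sX sY sP sM
  have S := (sP.add sM).sub ((sX.add sY).mul_left 2)
  rw [h1, h2, show ∀ x : ℝ, x + x - 2 * x = 0 by intro x; ring] at S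
  by_contra hk
  push Not at hk
  rcases lt_or_gt_of_ne hq2 with hlt | hgt
  · have S' := S.neg
    rw [neg_zero] at S'
    have hn : ∀ i, 0 ≤ -(|X i + Y i| ^ q + |X i - Y i| ^ q - 2 * (|X i| ^ q + |Y i| ^ q)) := by
      intro i
      by_cases hx : X i = 0 ∨ Y i = 0
      · rw [clarkson_eq (q := q) (by linarith) hx]; simp
      push Not at hx
      have := clarkson_lt hq0 hlt hx.1 hx.2
      linarith
    have h : -(|X k + Y k| ^ q + |X k - Y k| ^ q - 2 * (|X k| ^ q + |Y k| ^ q)) = 0 :=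
      congrFun ((hasSum_zero_iff_of_nonneg hn).1 S') k
    have := clarkson_lt hq0 hlt hk.1 hk.2
    linarith
  · have hn : ∀ i, 0 ≤ (|X i + Y i| ^ q + |X i - Y i| ^ q - 2 * (|X i| ^ q + |Y i| ^ q)) := by
      intro i
      by_cases hx : X i = 0 ∨ Y i = 0
      · rw [clarkson_eq (q := q) (by linarith) hx]; simp
      push Not at hx
      have := clarkson_gt hgt hx.1 hx.2
      linarith
    have h : (|X k + Y k| ^ q + |X k - Y k| ^ q - 2 * (|X k| ^ q + |Y k| ^ q)) = 0 :=
      congrFun ((hasSum_zero_iff_of_nonneg hn).1 S) k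
    have := clarkson_gt hgt hk.1 hk.2
    linarith

lemma lp_mid (hp1 : 1 < p) (hptop : p ≠ ∞) (X Y : lp (fun _ : ℕ => ℝ) p)
    (h1 : ‖X + Y‖ = 2 * ‖X‖) (h2 : ‖Y‖ = ‖X‖) : X = Y := by
  have hq : 1 < p.toReal := by
    rw [← ENNReal.toReal_one]; exact (ENNReal.toReal_lt_toReal (by simp) hptop).2 hp1
  set q := p.toReal with hqd
  have hq0 : 0 < p.toReal := by linarith
  have sX := lp.hasSum_norm hq0 X
  have sY := lp.hasSum_norm hq0 Y
  have sP := lp.hasSum_norm hq0 (X + Y)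
  simp only [lp.coeFn_add, Pi.add_apply, Real.norm_eq_abs] at sX sY sP
  rw [← hqd] at sX sY sP
  have h3 : (2 : ℝ) ^ q = 2 * 2 ^ (q - 1) := by
    rw [← Real.rpow_one_add' (by norm_num) (by linarith)]; congr 1; ring
  have S := ((sX.add sY).mul_left (2 ^ (q - 1))).sub sP
  rw [h1, h2, Real.mul_rpow (by norm_num) (norm_nonneg _), h3,
    show ∀ x y: ℝ, y * (x + x) - 2 * y * x = 0 by intro x y; ring] at S
  have hn : ∀ i, 0 ≤ 2 ^ (q - 1) * (|X i| ^ q + |Y i| ^ q) - |X i + Y i| ^ q := by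
    intro i
    by_cases hx : X i = Y i
    · rw [hx, ← two_mul (Y i), abs_mul, Real.mul_rpow (by norm_num) (abs_nonneg _), abs_two, h3]
      apply le_of_eq; ring
    have := mid_lt hq hx
    linarith
  ext k
  by_contra hk
  have h : 2 ^ (q - 1) * (|X k| ^ q + |Y k| ^ q) - |X k + Y k| ^ q = 0 :=
    congrFun ((hasSum_zero_iff_of_nonneg hn).1 S) k
  have := mid_lt hq hk
  linarith
end

section counterexample

structure Pt (p : ℝ≥0∞) where
  n : ℕ
  j : ℕ

noncomputable def lpFin (p : ℝ≥0∞) (N : ℕ) (c : ℕ → ℝ) : lp (fun _ : ℕ => ℝ) p :=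
  ∑ i ∈ Finset.range N, lp.single p i (c i)

lemma lpFin_sub (p : ℝ≥0∞) (N : ℕ) (c d : ℕ → ℝ) :
    lpFin p N c - lpFin p N d = lpFin p N (fun i => c i - d i) := by
  simp only [lpFin, lp.single_sub, Finset.sum_sub_distrib]

lemma lpFin_add (p : ℝ≥0∞) (N : ℕ) (c d : ℕ → ℝ) :
    lpFin p N c + lpFin p N d = lpFin p N (fun i => c i + d i) := by
  simp only [lpFin, lp.single_add, Finset.sum_add_distrib]

noncomputable def ph {p : ℝ≥0∞} (K : ℕ) (x : Pt p) (i : ℕ) : ℝ :=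
  if i * 2 ^ x.n < x.j * 2 ^ K then 2 ^ x.n else 0

noncomputable def pe {p : ℝ≥0∞} (K : ℕ) (x : Pt p) : lp (fun _ : ℕ => ℝ) p :=
  lpFin p (2 ^ K) (fun i => ((2 ^ K : ℝ)⁻¹) ^ (1 / p.toReal) * ph K x i)

variable {p : ℝ≥0∞} [h1p : Fact (1 ≤ p)] [hpt : Fact (p ≠ ∞)]

lemma q_pos : 0 < p.toReal :=
  ENNReal.toReal_pos (by have := h1p.out; intro h; simp [h] at this) hpt.out

lemma lpFin_norm (N : ℕ) (c : ℕ → ℝ) :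
    ‖lpFin p N c‖ ^ p.toReal = ∑ i ∈ Finset.range N, |c i| ^ p.toReal := by
  rw [lpFin, lp.norm_sum_single q_pos]
  simp

lemma scale_norm (K : ℕ) (c : ℕ → ℝ) :
    ‖lpFin p (2 ^ K) (fun i => ((2 ^ K : ℝ)⁻¹) ^ (1 / p.toReal) * c i)‖ ^ p.toReal =
      (2 ^ K : ℝ)⁻¹ * ∑ i ∈ Finset.range (2 ^ K), |c i| ^ p.toReal := by
  have hq : 0 < p.toReal := q_pos
  rw [lpFin_norm, Finset.mul_sum]
  refine Finset.sum_congr rfl fun i _ => ?_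
  rw [abs_mul, Real.mul_rpow (abs_nonneg _) (abs_nonneg _), abs_of_nonneg (by positivity),
    ← Real.rpow_mul (by positivity), one_div, inv_mul_cancel₀ hq.ne', Real.rpow_one]

lemma pe_dist (K : ℕ) (x y : Pt p) :
    ‖pe K x - pe K y‖ ^ p.toReal =
      (2 ^ K : ℝ)⁻¹ * ∑ i ∈ Finset.range (2 ^ K), |ph K x i - ph K y i| ^ p.toReal := by
  rw [← scale_norm, pe, pe, lpFin_sub]
  simp only [mul_sub]

lemma ph_succ (K : ℕ) (x : Pt p) (hx : x.n ≤ K) (i : ℕ) : ph (K + 1) x i = ph K x (i / 2) := by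
  obtain ⟨m, rfl⟩ := Nat.exists_eq_add_of_le hx
  unfold ph
  have e1 : i * 2 ^ x.n < x.j * 2 ^ (x.n + m + 1) ↔ i < x.j * 2 ^ m * 2 := by
    rw [show x.j * 2 ^ (x.n + m + 1) = (x.j * 2 ^ m * 2) * 2 ^ x.n by ring]
    exact Nat.mul_lt_mul_right (by positivity)
  have e2 : i / 2 * 2 ^ x.n < x.j * 2 ^ (x.n + m) ↔ i / 2 < x.j * 2 ^ m := by
    rw [show x.j * 2 ^ (x.n + m) = (x.j * 2 ^ m) * 2 ^ x.n by ring]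
    exact Nat.mul_lt_mul_right (by positivity)
  have e3 : i * 2 ^ x.n < x.j * 2 ^ (x.n + m + 1) ↔ i / 2 * 2 ^ x.n < x.j * 2 ^ (x.n + m) := by
    rw [e1, e2]; omega
  simp only [e3]

lemma sum_double (f : ℕ → ℝ) (N : ℕ) :
    ∑ i ∈ Finset.range (N * 2), f (i / 2) = 2 * ∑ i ∈ Finset.range N, f i := by
  induction N with
  | zero => simp
  | succ N ih =>
    rw [show (N + 1) * 2 = N * 2 + 1 + 1 by ring, Finset.sum_range_succ, Finset.sum_range_succ, ih,
      Finset.sum_range_succ, show (N * 2 + 1) / 2 = N by omega, show N * 2 / 2 = N by omega]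
    ring

lemma pe_cons_succ (K : ℕ) (x y : Pt p) (hx : x.n ≤ K) (hy : y.n ≤ K) :
    ‖pe (K + 1) x - pe (K + 1) y‖ = ‖pe K x - pe K y‖ := by
  have hq : 0 < p.toReal := q_pos
  rw [← Real.rpow_left_inj (norm_nonneg _) (norm_nonneg _) hq.ne', pe_dist, pe_dist]
  simp only [ph_succ K x hx, ph_succ K y hy]
  rw [pow_succ 2 K, pow_succ 2 K, sum_double (fun i => |ph K x i - ph K y i| ^ p.toReal)]
  field_simp

lemma pe_cons {K L : ℕ} (x y : Pt p) (hx : x.n ≤ K) (hy : y.n ≤ K) (h : K ≤ L) :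
    ‖pe L x - pe L y‖ = ‖pe K x - pe K y‖ := by
  induction L, h using Nat.le_induction with
  | base => rfl
  | succ L h ih => rw [pe_cons_succ L x y (hx.trans h) (hy.trans h), ih]

noncomputable instance : PseudoMetricSpace (Pt p) where
  dist x y := ‖pe (max x.n y.n) x - pe (max x.n y.n) y‖
  dist_self x := by simp
  dist_comm x y := by rw [max_comm, norm_sub_rev]
  dist_triangle x y z := by
    have hxy := pe_cons (K := max x.n y.n) (L := max x.n (max y.n z.n)) x y (by simp) (by simp)
      (by omega)
    have hyz := pe_cons (K := max y.n z.n) (L := max x.n (max y.n z.n)) y z (by simp) (by simp)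
      (by omega)
    have hxz := pe_cons (K := max x.n z.n) (L := max x.n (max y.n z.n)) x z (by simp) (by simp)
      (by omega)
    rw [← hxy, ← hyz, ← hxz]
    exact norm_sub_le_norm_sub_add_norm_sub _ _ _

lemma pt_dist (K : ℕ) (x y : Pt p) (hx : x.n ≤ K) (hy : y.n ≤ K) :
    dist x y = ‖pe K x - pe K y‖ :=
  (pe_cons x y (le_max_left _ _) (le_max_right _ _) (max_le hx hy)).symm

lemma pe_zero (K n : ℕ) : pe K (⟨n, 0⟩ : Pt p) = 0 := by
  simp [pe, ph, lpFin]

lemma pe_two (K n j : ℕ) : pe K (⟨n + 1, 2 * j⟩ : Pt p) = pe K ⟨n, j⟩ + pe K ⟨n, j⟩ := by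
  rw [pe, pe, lpFin_add]
  congr 1
  funext i
  have : i * 2 ^ (n + 1) < 2 * j * 2 ^ K ↔ i * 2 ^ n < j * 2 ^ K := by
    rw [pow_succ, show i * (2 ^ n * 2) = 2 * (i * 2 ^ n) by ring, mul_assoc]
    omega
  simp only [ph, this]
  split_ifs <;> ring

lemma dist_O (K : ℕ) (x : Pt p) (hx : x.n ≤ K) : dist (⟨0, 0⟩ : Pt p) x = ‖pe K x‖ := by
  rw [pt_dist K _ _ (Nat.zero_le _) hx, pe_zero, zero_sub, norm_neg]

lemma disj_dist (n j : ℕ) (hj : j ≤ 2 ^ n) :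
    ‖pe (n + 1) (⟨n, 2 ^ n⟩ : Pt p)‖ ^ p.toReal =
      ‖pe (n + 1) (⟨n, 2 ^ n⟩ : Pt p) - pe (n + 1) ⟨n, j⟩‖ ^ p.toReal +
      ‖pe (n + 1) (⟨n, j⟩ : Pt p)‖ ^ p.toReal ∧
    ‖pe (n + 1) (⟨n, 2 ^ n⟩ : Pt p) - pe (n + 1) ⟨n + 1, 2 * j⟩‖ ^ p.toReal =
      ‖pe (n + 1) (⟨n, 2 ^ n⟩ : Pt p) - pe (n + 1) ⟨n, j⟩‖ ^ p.toReal +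
      ‖pe (n + 1) (⟨n, j⟩ : Pt p)‖ ^ p.toReal := by
  have hq : 0 < p.toReal := q_pos
  have z : ∀ x : Pt p, ‖pe (n + 1) x‖ = ‖pe (n + 1) x - pe (n + 1) ⟨0, 0⟩‖ := by
    intro x; rw [pe_zero, sub_zero]
  rw [z, z ⟨n, j⟩]
  simp only [pe_dist]
  rw [← mul_add, ← Finset.sum_add_distrib]
  have key : ∀ i ∈ Finset.range (2 ^ (n + 1)), ph (n + 1) (⟨0, 0⟩ : Pt p) i = 0 ∧
      ph (n + 1) (⟨n, 2 ^ n⟩ : Pt p) i = 2 ^ n ∧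
      ((ph (n + 1) (⟨n, j⟩ : Pt p) i = 0 ∧ ph (n + 1) (⟨n + 1, 2 * j⟩ : Pt p) i = 0) ∨
       (ph (n + 1) (⟨n, j⟩ : Pt p) i = 2 ^ n ∧
        ph (n + 1) (⟨n + 1, 2 * j⟩ : Pt p) i = 2 * 2 ^ n)) := by
    intro i hi
    rw [Finset.mem_range] at hi
    have hpos : 0 < 2 ^ n := by positivity
    have : i * 2 ^ (n + 1) < 2 * j * 2 ^ (n + 1) ↔ i * 2 ^ n < j * 2 ^ (n + 1) := by
      rw [Nat.mul_lt_mul_right (by positivity), pow_succ, show j * (2 ^ n * 2) = 2 * j * 2 ^ n by ring,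
        Nat.mul_lt_mul_right (by positivity)]
    refine ⟨by simp [ph], ?_, ?_⟩
    · simp only [ph]
      rw [if_pos]
      rw [mul_comm]
      exact (Nat.mul_lt_mul_left hpos).2 hi
    · simp only [ph, this]
      by_cases h : i * 2 ^ n < j * 2 ^ (n + 1)
      · right; simp only [if_pos h]; exact ⟨trivial, by ring⟩
      · left; simp [if_neg h]
  constructor
  · congr 1
    refine Finset.sum_congr rfl fun i hi => ?_
    obtain ⟨h0, h1, h | h⟩ := key i hi
    · rw [h0, h1, h.1]; simp [Real.zero_rpow hq.ne']
    · rw [h0, h1, h.1]; simp [Real.zero_rpow hq.ne']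
  · congr 1
    refine Finset.sum_congr rfl fun i hi => ?_
    obtain ⟨h0, h1, h | h⟩ := key i hi
    · rw [h0, h1, h.1, h.2]; simp [Real.zero_rpow hq.ne']
    · rw [h0, h1, h.1, h.2, show (2 ^ n - 2 * 2 ^ n : ℝ) = - 2 ^ n by ring, abs_neg]
      simp [Real.zero_rpow hq.ne']

lemma ph_self (n j i : ℕ) : ph n (⟨n, j⟩ : Pt p) i = if i < j then 2 ^ n else 0 := by
  have : i * 2 ^ n < j * 2 ^ n ↔ i < j := Nat.mul_lt_mul_right (by positivity)
  simp only [ph, this]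

lemma dist_step (n j : ℕ) (hj : j < 2 ^ n) :
    dist (⟨n, j⟩ : Pt p) ⟨n, j + 1⟩ ^ p.toReal = (2 ^ n : ℝ)⁻¹ * (2 ^ n : ℝ) ^ p.toReal := by
  have hq : 0 < p.toReal := q_pos
  rw [pt_dist n _ _ le_rfl le_rfl, pe_dist]
  congr 1
  simp only [ph_self]
  rw [Finset.sum_eq_single j]
  · simp
  · intro i _ hi
    by_cases h : i < j
    · rw [if_pos h, if_pos (by omega)]; simp [Real.zero_rpow hq.ne']
    · rw [if_neg h, if_neg (by omega)]; simp [Real.zero_rpow hq.ne']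
  · intro h; simp at h; omega

lemma dist_lower (n j : ℕ) (hj : 0 < j) :
    (2 ^ n : ℝ)⁻¹ * (2 ^ n : ℝ) ^ p.toReal ≤ dist (⟨0, 0⟩ : Pt p) ⟨n, j⟩ ^ p.toReal := by
  have hq : 0 < p.toReal := q_pos
  rw [pt_dist n _ _ (Nat.zero_le _) le_rfl, pe_dist]
  refine mul_le_mul_of_nonneg_left ?_ (by positivity)
  refine le_trans (le_of_eq ?_) (Finset.single_le_sum (f := fun i =>
    |ph n (⟨0, 0⟩ : Pt p) i - ph n (⟨n, j⟩ : Pt p) i| ^ p.toReal) (fun i _ => by positivity)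
    (Finset.mem_range.2 (show 0 < 2 ^ n by positivity)))
  simp only [ph_self]
  simp [ph, hj]

lemma dist_clip (n j : ℕ) : dist (⟨n, j⟩ : Pt p) ⟨n, min j (2 ^ n)⟩ = 0 := by
  rw [pt_dist n _ _ le_rfl le_rfl]
  have : pe n (⟨n, j⟩ : Pt p) = pe n ⟨n, min j (2 ^ n)⟩ := by
    rw [pe, pe, lpFin, lpFin]
    refine Finset.sum_congr rfl fun i hi => ?_
    rw [Finset.mem_range] at hi
    rw [ph_self, ph_self]
    simp [hi]
  rw [this, sub_self, norm_zero]

lemma dist_OO (n : ℕ) : dist (⟨0, 0⟩ : Pt p) ⟨n, 0⟩ = 0 := by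
  rw [dist_O n _ le_rfl, pe_zero, norm_zero]

lemma no_isometry (hp1 : 1 < p) (hp2 : p ≠ 2) (g : Pt p → lp (fun _ : ℕ => ℝ) p)
    (hg : Isometry g) : False := by
  have hq : 0 < p.toReal := q_pos
  have hptop := hpt.out
  obtain ⟨W, hW⟩ : ∃ W : Pt p → lp (fun _ : ℕ => ℝ) p, ∀ x, W x = g x - g ⟨0, 0⟩ := ⟨_, fun _ => rfl⟩
  have Wd : ∀ x y, ‖W x - W y‖ = dist x y := by
    intro x y; rw [hW, hW, sub_sub_sub_cancel_right, ← dist_eq_norm, hg.dist_eq]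
  have Wn : ∀ x, ‖W x‖ = dist (⟨0, 0⟩ : Pt p) x := by
    intro x; rw [hW, ← dist_eq_norm, hg.dist_eq, dist_comm]
  have W0 : ∀ n, W ⟨n, 0⟩ = 0 := by
    intro n; rw [← norm_eq_zero, Wn, dist_OO]
  have W2 : ∀ n j, W ⟨n + 1, 2 * j⟩ = W ⟨n, j⟩ + W ⟨n, j⟩ := by
    intro n j
    have h := lp_mid hp1 hptop (W ⟨n, j⟩) (W ⟨n + 1, 2 * j⟩ - W ⟨n, j⟩) ?_ ?_
    · rw [eq_sub_iff_add_eq] at h; exact h.symm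
    · rw [add_sub_cancel, Wn, Wn, dist_O (n + 1) _ le_rfl, dist_O (n + 1) _ (Nat.le_succ n), pe_two,
        ← two_smul ℝ, norm_smul]
      simp
    · rw [Wd, Wn, dist_O (n + 1) _ (Nat.le_succ n), pt_dist (n + 1) _ _ le_rfl (Nat.le_succ n), pe_two]
      simp
  have WU : ∀ n, W ⟨n, 2 ^ n⟩ = (2 ^ n : ℝ) • W ⟨0, 1⟩ := by
    intro n
    induction n with
    | zero => simp
    | succ n ih =>
      rw [pow_succ, mul_comm, W2, ih, ← two_smul ℝ, smul_smul, pow_succ, mul_comm]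
  have hU : W ⟨0, 1⟩ ≠ 0 := by
    intro h
    have h2 := dist_lower (p := p) 0 1 one_pos
    rw [← Wn, h, norm_zero, Real.zero_rpow hq.ne'] at h2
    norm_num at h2
  obtain ⟨k, hk⟩ : ∃ k, W ⟨0, 1⟩ k ≠ 0 := by
    by_contra hcon
    push Not at hcon
    exact hU (lp.ext (funext hcon))
  have hdich : ∀ n j, j ≤ 2 ^ n → W ⟨n, j⟩ k = 0 ∨ W ⟨n, j⟩ k = 2 ^ n * W ⟨0, 1⟩ k := by
    intro n j hj
    have hd := disj_dist (p := p) n j hj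
    rw [← dist_O (n + 1) _ (Nat.le_succ n), ← dist_O (n + 1) _ (Nat.le_succ n),
      ← pt_dist (n + 1) _ _ (Nat.le_succ n) (Nat.le_succ n),
      ← pt_dist (n + 1) _ _ (Nat.le_succ n) le_rfl] at hd
    have h := lp_disj hp1 hptop hp2 (W ⟨n, 2 ^ n⟩ - W ⟨n, j⟩) (W ⟨n, j⟩) ?_ ?_ k
    · rcases h with h | h
      · right
        rw [lp.coeFn_sub, Pi.sub_apply, sub_eq_zero, WU] at h
        rw [← h, lp.coeFn_smul, Pi.smul_apply, smul_eq_mul]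
      · left; exact h
    · rw [sub_add_cancel, Wd, Wn, Wn]; exact hd.1
    · rw [sub_sub, ← W2, Wd, Wd, Wn]; exact hd.2
  have hbound : ∀ n : ℕ, |W ⟨0, 1⟩ k| ^ p.toReal * 2 ^ n ≤ 1 := by
    intro n
    obtain ⟨j, hj, hj0, hj1⟩ : ∃ j, j < 2 ^ n ∧ W ⟨n, j⟩ k = 0 ∧ W ⟨n, j + 1⟩ k ≠ 0 := by
      by_contra hcon
      push Not at hcon
      have : ∀ j, j ≤ 2 ^ n → W ⟨n, j⟩ k = 0 := by
        intro j
        induction j with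
        | zero => intro _; rw [W0]; rfl
        | succ j ih => intro h; exact hcon j h (ih (by omega))
      have h := this _ le_rfl
      rw [WU, lp.coeFn_smul, Pi.smul_apply, smul_eq_mul] at h
      have : (2 : ℝ) ^ n ≠ 0 := by positivity
      exact (mul_ne_zero this hk) h
    have h1 := (hdich n (j + 1) hj).resolve_left hj1
    have h2 := lp.norm_apply_le_norm (p := p) (zero_lt_one.trans hp1).ne' (W ⟨n, j⟩ - W ⟨n, j + 1⟩) k
    rw [Wd, lp.coeFn_sub, Pi.sub_apply, hj0, h1, zero_sub, norm_neg, norm_mul, Real.norm_eq_abs,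
      Real.norm_eq_abs, abs_of_nonneg (by positivity : (0 : ℝ) ≤ 2 ^ n)] at h2
    have h3 := Real.rpow_le_rpow (by positivity) h2 hq.le
    rw [dist_step n j hj, Real.mul_rpow (by positivity) (by positivity), mul_comm] at h3
    have h4 : (0 : ℝ) < (2 ^ n) ^ p.toReal := by positivity
    have h5 := le_of_mul_le_mul_right h3 h4
    have h6 : (0 : ℝ) < 2 ^ n := by positivity
    calc _ ≤ (2 ^ n : ℝ)⁻¹ * 2 ^ n := mul_le_mul_of_nonneg_right h5 h6.le
      _ = 1 := inv_mul_cancel₀ h6.ne'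
  have hpos : 0 < |W ⟨0, 1⟩ k| ^ p.toReal := Real.rpow_pos_of_pos (abs_pos.2 hk) _
  obtain ⟨n, hn⟩ := pow_unbounded_of_one_lt (|W ⟨0, 1⟩ k| ^ p.toReal)⁻¹ (one_lt_two (α := ℝ))
  have := hbound n
  rw [inv_lt_iff_one_lt_mul₀ hpos] at hn
  linarith

lemma part_two (hp1 : 1 < p) (hp2 : p ≠ 2) :
    ∃ (M : Type) (_ : MetricSpace M), MetricLocallyFinite M ∧
      (∀ S : Set M, S.Finite → ∃ f : S → lp (fun _ : ℕ => ℝ) p, Isometry f) ∧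
      ¬ ∃ f : M → lp (fun _ : ℕ => ℝ) p, Isometry f := by
  have hq : 1 < p.toReal := by
    rw [← ENNReal.toReal_one]; exact (ENNReal.toReal_lt_toReal (by simp) hpt.out).2 hp1
  refine ⟨SeparationQuotient (Pt p), inferInstance, ?_, ?_, ?_⟩
  · intro x R
    set O : SeparationQuotient (Pt p) := SeparationQuotient.mk ⟨0, 0⟩ with hO
    set D := dist O x + R with hD
    have hb : 1 < (2 : ℝ) ^ (p.toReal - 1) := Real.one_lt_rpow (by norm_num) (by linarith)
    obtain ⟨L, hL⟩ := pow_unbounded_of_one_lt (D ^ p.toReal) hb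
    have hfin : ({O} ∪ (fun z : ℕ × ℕ => (SeparationQuotient.mk (⟨z.1, z.2⟩ : Pt p))) ''
        (Set.Iic L ×ˢ Set.Iic (2 ^ L))).Finite :=
      (Set.finite_singleton _).union (((Set.finite_Iic L).prod (Set.finite_Iic _)).image _)
    refine hfin.subset ?_
    intro y hy
    obtain ⟨⟨n, j⟩, rfl⟩ := SeparationQuotient.surjective_mk y
    have hcl : SeparationQuotient.mk (⟨n, j⟩ : Pt p) = SeparationQuotient.mk ⟨n, min j (2 ^ n)⟩ := by
      rw [← dist_eq_zero, SeparationQuotient.dist_mk, dist_clip]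
    rw [hcl] at hy ⊢
    rw [Metric.mem_closedBall] at hy
    rcases Nat.eq_zero_or_pos (min j (2 ^ n)) with h0 | h0
    · left
      rw [h0, Set.mem_singleton_iff, ← dist_eq_zero, hO, SeparationQuotient.dist_mk, dist_comm,
        dist_OO]
    · right
      refine ⟨(n, min j (2 ^ n)), ?_, rfl⟩
      have h1 := dist_lower (p := p) n _ h0
      have h2 : dist (⟨0, 0⟩ : Pt p) ⟨n, min j (2 ^ n)⟩ ≤ D := by
        rw [← SeparationQuotient.dist_mk, ← hO]
        have := dist_triangle O x (SeparationQuotient.mk ⟨n, min j (2 ^ n)⟩)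
        rw [dist_comm x] at this
        linarith
      have h3 := Real.rpow_le_rpow dist_nonneg h2 (by linarith : 0 ≤ p.toReal)
      have h4 : (2 ^ n : ℝ)⁻¹ * (2 ^ n : ℝ) ^ p.toReal = ((2 : ℝ) ^ (p.toReal - 1)) ^ n := by
        rw [← Real.rpow_natCast (2 ^ (p.toReal - 1)), ← Real.rpow_mul (by norm_num),
          ← Real.rpow_natCast 2, ← Real.rpow_mul (by norm_num), ← Real.rpow_neg (by norm_num),
          ← Real.rpow_add (by norm_num)]
        congr 1; ring
      have h5 : ((2 : ℝ) ^ (p.toReal - 1)) ^ n < ((2 : ℝ) ^ (p.toReal - 1)) ^ L := by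
        rw [← h4]; linarith
      have h6 : n < L := (pow_lt_pow_iff_right₀ hb).1 h5
      exact ⟨h6.le, (min_le_right _ _).trans (Nat.pow_le_pow_right (by norm_num) h6.le)⟩
  · intro S hS
    have hout : ∀ s : SeparationQuotient (Pt p), ∃ x : Pt p, SeparationQuotient.mk x = s :=
      SeparationQuotient.surjective_mk
    choose out hout using hout
    obtain ⟨K, hK⟩ := (hS.image (fun s => (out s).n)).bddAbove
    refine ⟨fun s => pe K (out s), Isometry.of_dist_eq fun s t => ?_⟩
    rw [dist_eq_norm, ← pt_dist K _ _ (hK ⟨s, s.2, rfl⟩) (hK ⟨t, t.2, rfl⟩),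
      ← SeparationQuotient.dist_mk, hout, hout]
    rfl
  · rintro ⟨f, hf⟩
    exact no_isometry hp1 hp2 (f ∘ SeparationQuotient.mk) 
      (hf.comp (Isometry.of_dist_eq fun x y => SeparationQuotient.dist_mk x y))

end counterexample

section partone

variable {p : ℝ≥0∞} [h1p : Fact (1 ≤ p)] [hpt : Fact (p ≠ ∞)]

lemma glue_hasSum (U : lp (fun _ : ℕ => lp (fun _ : ℕ => ℝ) p) p) :
    HasSum (fun k : ℕ => ‖U (Nat.unpair k).1 (Nat.unpair k).2‖ ^ p.toReal) (‖U‖ ^ p.toReal) := by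
  have hq : 0 < p.toReal := q_pos
  have hs : Summable (fun z : ℕ × ℕ => ‖U z.1 z.2‖ ^ p.toReal) := by
    rw [summable_prod_of_nonneg (fun z => by positivity)]
    refine ⟨fun i => (lp.hasSum_norm hq (U i)).summable, ?_⟩
    have := (lp.hasSum_norm hq U).summable
    refine this.congr fun i => ?_
    exact (lp.hasSum_norm hq (U i)).tsum_eq.symm
  have h2 := hs.hasSum.prod_fiberwise (fun i => lp.hasSum_norm hq (U i))
  have h3 := h2.unique (lp.hasSum_norm hq U)
  have h4 := hs.hasSum
  rw [h3] at h4
  exact (Nat.pairEquiv.symm.hasSum_iff (f := fun z : ℕ × ℕ => ‖U z.1 z.2‖ ^ p.toReal)).2 h4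

noncomputable def glue (U : lp (fun _ : ℕ => lp (fun _ : ℕ => ℝ) p) p) : lp (fun _ : ℕ => ℝ) p :=
  ⟨fun k => U (Nat.unpair k).1 (Nat.unpair k).2, memℓp_gen (glue_hasSum U).summable⟩

lemma glue_apply (U : lp (fun _ : ℕ => lp (fun _ : ℕ => ℝ) p) p) (k : ℕ) :
    glue U k = U (Nat.unpair k).1 (Nat.unpair k).2 := rfl

lemma glue_dist (U V : lp (fun _ : ℕ => lp (fun _ : ℕ => ℝ) p) p) :
    dist (glue U) (glue V) = ‖U - V‖ := by
  have hq : 0 < p.toReal := q_pos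
  rw [dist_eq_norm]
  have : glue U - glue V = glue (U - V) := by
    apply lp.ext; funext k
    simp only [lp.coeFn_sub, Pi.sub_apply, glue_apply]
  rw [this, ← Real.rpow_left_inj (norm_nonneg _) (norm_nonneg _) hq.ne',
    lp.norm_rpow_eq_tsum hq]
  exact (glue_hasSum (U - V)).tsum_eq

lemma memlp_fin {E : Type*} [NormedAddCommGroup E] (N : ℕ) (c : ℕ → E) (hc : ∀ i, N ≤ i → c i = 0) :
    Memℓp (fun i => c i) p := by
  have hq : 0 < p.toReal := q_pos
  apply memℓp_gen
  apply summable_of_ne_finset_zero (s := Finset.range N)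
  intro i hi
  rw [Finset.mem_range, not_lt] at hi
  rw [hc i hi, norm_zero, Real.zero_rpow hq.ne']

noncomputable def tc (t : ℝ) (i : ℕ) : ℝ := max 0 (1 - |t - i|)

lemma tc_zero {t : ℝ} {i : ℕ} (h : 1 ≤ |t - i|) : tc t i = 0 := max_eq_left (by linarith)

lemma tc_lip (t s : ℝ) (i : ℕ) : |tc t i - tc s i| ≤ |t - s| := by
  have h1 : |tc t i - tc s i| ≤ |(1 - |t - i|) - (1 - |s - i|)| := by
    have := abs_max_sub_max_le_abs (1 - |t - i|) (1 - |s - i|) 0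
    unfold tc
    rw [max_comm 0, max_comm 0]; exact this
  refine h1.trans ?_
  rw [sub_sub_sub_cancel_left]
  have := abs_abs_sub_abs_le (s - i) (t - i)
  rw [sub_sub_sub_cancel_right, abs_sub_comm s t] at this
  exact this

noncomputable def tent (t : ℝ) : lp (fun _ : ℕ => ℝ) p :=
  ⟨tc t, memlp_fin (⌈t⌉₊ + 1) (tc t) (fun i hi => tc_zero (by
    have h1 := Nat.le_ceil t
    have h2 : ((⌈t⌉₊ + 1 : ℕ) : ℝ) ≤ i := by exact_mod_cast hi
    push_cast at h2
    rw [abs_sub_comm]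
    exact le_trans (by linarith) (le_abs_self _)))⟩

lemma tent_apply (t : ℝ) (i : ℕ) : (tent t : lp (fun _ : ℕ => ℝ) p) i = tc t i := rfl

lemma floor_of_tc {t : ℝ} (ht : 0 ≤ t) {i : ℕ} (h : tc t i ≠ 0) : i = ⌊t⌋₊ ∨ i = ⌊t⌋₊ + 1 := by
  have h1 : |t - i| < 1 := by
    by_contra hc; exact h (tc_zero (not_lt.1 hc))
  rw [abs_lt] at h1
  have h2 := Nat.floor_le ht
  have h3 := Nat.lt_floor_add_one t
  have h4 : (i : ℝ) < (⌊t⌋₊ + 2 : ℕ) := by push_cast; linarith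
  have h5 : ((⌊t⌋₊ : ℕ) : ℝ) < (i + 1 : ℕ) := by push_cast; linarith
  have h4 := Nat.cast_lt.1 h4
  have h5 := Nat.cast_lt.1 h5
  omega

lemma tent_lip {t s : ℝ} (ht : 0 ≤ t) (hs : 0 ≤ s) :
    ‖(tent t : lp (fun _ : ℕ => ℝ) p) - tent s‖ ≤ 4 * |t - s| := by
  have hp0 : 0 < p := zero_lt_one.trans_le h1p.out
  set F : Finset ℕ := {⌊t⌋₊, ⌊t⌋₊ + 1, ⌊s⌋₊, ⌊s⌋₊ + 1} with hF
  have h : (tent t : lp (fun _ : ℕ => ℝ) p) - tent s =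
      ∑ i ∈ F, lp.single p i (tc t i - tc s i) := by
    apply lp.ext; funext k
    rw [lp.coeFn_sub, Pi.sub_apply, tent_apply, tent_apply, lp.coeFn_sum, Finset.sum_apply]
    simp only [lp.single_apply]
    by_cases hk : k ∈ F
    · rw [Finset.sum_eq_single k]
      · simp
      · intro b _ hb
        simp [Pi.single_apply, hb.symm]
      · intro h; exact absurd hk h
    · rw [Finset.sum_eq_zero]
      · have h1 : tc t k = 0 := by
          by_contra hc
          rcases floor_of_tc ht hc with h | h <;> simp [hF, h] at hk
        have h2 : tc s k = 0 := by
          by_contra hc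
          rcases floor_of_tc hs hc with h | h <;> simp [hF, h] at hk
        rw [h1, h2, sub_zero]
      · intro b hb
        have : k ≠ b := by rintro rfl; exact hk hb
        simp [Pi.single_apply, this]
  rw [h]
  calc _ ≤ ∑ i ∈ F, ‖lp.single (E := fun _ : ℕ => ℝ) p i (tc t i - tc s i)‖ := norm_sum_le _ _
    _ ≤ ∑ i ∈ F, |t - s| := by
      refine Finset.sum_le_sum fun i _ => ?_
      rw [lp.norm_single hp0]
      exact tc_lip t s i
    _ = F.card * |t - s| := by simp
    _ ≤ 4 * |t - s| := by
      refine mul_le_mul_of_nonneg_right ?_ (abs_nonneg _)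
      exact_mod_cast Finset.card_le_four

lemma tent_norm {t : ℝ} (ht : 0 ≤ t) : 1 / 2 ≤ ‖(tent t : lp (fun _ : ℕ => ℝ) p)‖ := by
  have hp0 : 0 < p := zero_lt_one.trans_le h1p.out
  obtain ⟨i, hi⟩ : ∃ i : ℕ, |t - i| ≤ 1 / 2 := by
    have h2 := Nat.floor_le ht
    have h3 := Nat.lt_floor_add_one t
    by_cases h : t ≤ ⌊t⌋₊ + 1 / 2
    · exact ⟨⌊t⌋₊, by rw [abs_le]; constructor <;> linarith⟩
    · exact ⟨⌊t⌋₊ + 1, by push_cast; rw [abs_le]; constructor <;> linarith⟩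
  refine le_trans ?_ (lp.norm_apply_le_norm hp0.ne' _ i)
  rw [tent_apply]
  refine le_trans ?_ (le_abs_self _)
  exact le_trans (by linarith) (le_max_right _ _)

lemma normalize_lip {E : Type*} [NormedAddCommGroup E] [NormedSpace ℝ E] (u v : E)
    (hu : 1 / 2 ≤ ‖u‖) (hv : 1 / 2 ≤ ‖v‖) :
    ‖‖u‖⁻¹ • u - ‖v‖⁻¹ • v‖ ≤ 4 * ‖u - v‖ := by
  have hu0 : 0 < ‖u‖ := by linarith
  have hv0 : 0 < ‖v‖ := by linarith
  have e : ‖u‖⁻¹ • u - ‖v‖⁻¹ • v = ‖u‖⁻¹ • (u - v) + (‖u‖⁻¹ - ‖v‖⁻¹) • v := by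
    rw [smul_sub, sub_smul]; abel
  have h1 : ‖(‖u‖⁻¹ - ‖v‖⁻¹) • v‖ ≤ ‖u‖⁻¹ * ‖u - v‖ := by
    have : ‖u‖⁻¹ - ‖v‖⁻¹ = ‖u‖⁻¹ * ‖v‖⁻¹ * (‖v‖ - ‖u‖) := by field_simp
    rw [norm_smul, this, norm_mul, Real.norm_eq_abs, Real.norm_eq_abs, abs_of_pos (by positivity)]
    have h2 := abs_norm_sub_norm_le v u
    rw [norm_sub_rev v u] at h2
    calc _ = ‖u‖⁻¹ * |‖v‖ - ‖u‖| := by field_simp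
      _ ≤ _ := mul_le_mul_of_nonneg_left h2 (by positivity)
  have h3 : ‖u‖⁻¹ ≤ 2 := by
    rw [inv_le_comm₀ hu0 (by norm_num)]; linarith
  rw [e]
  refine (norm_add_le _ _).trans ?_
  rw [norm_smul, norm_inv, norm_norm]
  have := mul_le_mul_of_nonneg_right h3 (norm_nonneg (u - v))
  linarith

lemma exists_weights : ∃ a : ℝ → lp (fun _ : ℕ => ℝ) p,
    (∀ t, 0 ≤ t → ‖a t‖ = 1) ∧ (∀ t s, 0 ≤ t → 0 ≤ s → ‖a t - a s‖ ≤ 16 * |t - s|) ∧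
    (∀ t (i : ℕ), a t i ≠ 0 → t < i + 1 ∧ (i : ℝ) < t + 1) := by
  refine ⟨fun t => ‖(tent t : lp (fun _ : ℕ => ℝ) p)‖⁻¹ • tent t, ?_, ?_, ?_⟩
  · intro t ht
    have := tent_norm (p := p) ht
    rw [norm_smul, norm_inv, norm_norm, inv_mul_cancel₀]
    linarith
  · intro t s ht hs
    have h1 := normalize_lip _ _ (tent_norm (p := p) ht) (tent_norm (p := p) hs)
    have h2 := tent_lip (p := p) ht hs
    linarith
  · intro t i h
    have : tc t i ≠ 0 := by
      intro hc; apply h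
      rw [lp.coeFn_smul, Pi.smul_apply, tent_apply, hc, smul_zero]
    have h1 : |t - i| < 1 := by
      by_contra hc; exact this (tc_zero (not_lt.1 hc))
    rw [abs_lt] at h1
    constructor <;> linarith

/-- comparison of norms -/
lemma lp_le {E : Type*} [NormedAddCommGroup E] (G : lp (fun _ : ℕ => E) p)
    (a : lp (fun _ : ℕ => ℝ) p) (c : ℝ) (hc : 0 ≤ c) (h : ∀ i, ‖G i‖ ≤ c * |a i|) :
    ‖G‖ ≤ c * ‖a‖ := by
  have hp0 : 0 < p := zero_lt_one.trans_le h1p.out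
  have h1 : ‖G‖ ≤ ‖c • a‖ := lp.norm_mono hp0.ne' fun i => by
    rw [lp.coeFn_smul, Pi.smul_apply, norm_smul, Real.norm_eq_abs, Real.norm_eq_abs, abs_of_nonneg hc]
    exact h i
  rwa [norm_smul, Real.norm_eq_abs, abs_of_nonneg hc] at h1

lemma lp_ge {E : Type*} [NormedAddCommGroup E] (G : lp (fun _ : ℕ => E) p)
    (a : lp (fun _ : ℕ => ℝ) p) (c : ℝ) (hc : 0 ≤ c) (h : ∀ i, c * |a i| ≤ ‖G i‖) :
    c * ‖a‖ ≤ ‖G‖ := by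
  have hp0 : 0 < p := zero_lt_one.trans_le h1p.out
  have h1 : ‖c • a‖ ≤ ‖G‖ := lp.norm_mono hp0.ne' fun i => by
    rw [lp.coeFn_smul, Pi.smul_apply, norm_smul, Real.norm_eq_abs, Real.norm_eq_abs, abs_of_nonneg hc]
    exact h i
  rwa [norm_smul, Real.norm_eq_abs, abs_of_nonneg hc] at h1

lemma part_one (ε C : ℝ) (hε : 0 < ε) (hC : 1 ≤ C) (A : Type*) [MetricSpace A]
    (hA : MetricLocallyFinite A)
    (hfin : ∀ S : Set A, S.Finite →
      ∃ f : S → lp (fun _ : ℕ => ℝ) p, IsBilipschitzEmbedding C f) :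
    ∃ f : A → lp (fun _ : ℕ => ℝ) p, IsBilipschitzEmbedding ((1 + ε) * C) f := by
  classical
  rcases isEmpty_or_nonempty A with hE | ⟨⟨O⟩⟩
  · exact ⟨fun _ => 0, 1, one_pos, fun u => (hE.false u).elim⟩
  have hC0 : 0 < C := by linarith
  -- normalized local embeddings
  have hloc : ∀ R : ℝ, ∃ f : A → lp (fun _ : ℕ => ℝ) p, ∀ u v, dist u O ≤ R → dist v O ≤ R →
      dist u v ≤ ‖f u - f v‖ ∧ ‖f u - f v‖ ≤ C * dist u v := by
    intro R
    obtain ⟨f, r, hr, hf⟩ := hfin _ (hA O R)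
    refine ⟨fun u => if h : u ∈ Metric.closedBall O R then r⁻¹ • f ⟨u, h⟩ else 0, ?_⟩
    intro u v hu hv
    have hu' : u ∈ Metric.closedBall O R := hu
    have hv' : v ∈ Metric.closedBall O R := hv
    simp only [dif_pos hu', dif_pos hv']
    rw [← smul_sub, norm_smul, norm_inv, Real.norm_eq_abs, abs_of_pos hr, ← dist_eq_norm]
    obtain ⟨h1, h2⟩ := hf ⟨u, hu'⟩ ⟨v, hv'⟩
    rw [Subtype.dist_eq] at h1 h2
    constructor
    · rw [le_inv_mul_iff₀ hr]; exact h1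
    · rw [inv_mul_le_iff₀ hr]; linarith
  obtain ⟨δ, hδ, hδ1, hδ2⟩ : ∃ δ : ℝ, 0 < δ ∧ 16 * δ * C < 1 ∧
      C + 16 * δ * C ≤ (1 - 16 * δ * C) * ((1 + ε) * C) := by
    refine ⟨ε / (16 * (C + 1) * (2 + ε)), by positivity, ?_, ?_⟩
    · rw [show 16 * (ε / (16 * (C + 1) * (2 + ε))) * C = (ε * C) / ((C + 1) * (2 + ε)) by field_simp,
        div_lt_one (by positivity)]
      nlinarith
    · have h1 : 16 * (ε / (16 * (C + 1) * (2 + ε))) = ε / ((C + 1) * (2 + ε)) := by field_simp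
      rw [h1]
      have h2 : ε / ((C + 1) * (2 + ε)) * (C * (1 + ε) + 1) ≤ ε := by
        rw [div_mul_eq_mul_div, div_le_iff₀ (by positivity)]
        refine mul_le_mul_of_nonneg_left ?_ hε.le
        nlinarith
      nlinarith
  obtain ⟨a, ha1, ha2, ha3⟩ := exists_weights (p := p)
  choose g0 hg0 using fun i : ℕ => hloc (Real.exp ((i + 1) / δ))
  set g : ℕ → A → lp (fun _ : ℕ => ℝ) p := fun i u => g0 i u - g0 i O with hg
  set τ : A → ℝ := fun x => δ * Real.log (1 + dist x O) with hτ
  have hτ0 : ∀ x, 0 ≤ τ x := fun x =>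
    mul_nonneg hδ.le (Real.log_nonneg (by linarith [dist_nonneg (x := x) (y := O)]))
  have hball : ∀ x (i : ℕ), a (τ x) i ≠ 0 → dist x O ≤ Real.exp ((i + 1) / δ) := by
    intro x i h
    have h1 := (ha3 _ _ h).1
    have hx := dist_nonneg (x := x) (y := O)
    have h2 : Real.log (1 + dist x O) < (i + 1) / δ := by
      rw [lt_div_iff₀ hδ]; simp only [hτ] at h1; linarith
    rw [Real.log_lt_iff_lt_exp (by linarith)] at h2
    linarith
  have hgd : ∀ (i : ℕ) u v, dist u O ≤ Real.exp ((i + 1) / δ) → dist v O ≤ Real.exp ((i + 1) / δ) →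
      dist u v ≤ ‖g i u - g i v‖ ∧ ‖g i u - g i v‖ ≤ C * dist u v := by
    intro i u v hu hv
    simp only [hg, sub_sub_sub_cancel_right]
    exact hg0 i u v hu hv
  have hgn : ∀ (i : ℕ) u, dist u O ≤ Real.exp ((i + 1) / δ) → ‖g i u‖ ≤ C * dist u O := by
    intro i u hu
    exact (hg0 i u O hu (by rw [dist_self]; positivity)).2
  have hmem2 : ∀ (x y : A), Memℓp (fun i : ℕ => a (τ x) i • g i y) p := by
    intro x y
    refine memlp_fin (⌈τ x⌉₊ + 1) _ fun i hi => ?_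
    have : a (τ x) i = 0 := by
      by_contra hc
      have h1 := (ha3 _ _ hc).2
      have h2 := Nat.le_ceil (τ x)
      have h3 : ((⌈τ x⌉₊ + 1 : ℕ) : ℝ) ≤ i := by exact_mod_cast hi
      push_cast at h3
      linarith
    rw [this, zero_smul]
  let Q : A → A → lp (fun _ : ℕ => lp (fun _ : ℕ => ℝ) p) p := fun x y => ⟨_, hmem2 x y⟩
  have hQ : ∀ x y i, Q x y i = a (τ x) i • g i y := fun _ _ _ => rfl
  have main : ∀ x y, dist y O ≤ dist x O →
      (1 - 16 * δ * C) * dist x y ≤ ‖Q x x - Q y y‖ ∧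
      ‖Q x x - Q y y‖ ≤ (C + 16 * δ * C) * dist x y := by
    intro x y hxy
    have e : Q x x - Q y y = (Q x x - Q x y) + (Q x y - Q y y) := by abel
    have hG1 : ‖Q x x - Q x y‖ ≤ (C * dist x y) * ‖a (τ x)‖ := by
      refine lp_le _ _ _ (by positivity) fun i => ?_
      rw [lp.coeFn_sub, Pi.sub_apply, hQ, hQ, ← smul_sub, norm_smul, Real.norm_eq_abs, mul_comm]
      by_cases h : a (τ x) i = 0
      · rw [h]; simp
      have hx := hball x i h
      exact mul_le_mul_of_nonneg_right (hgd i x y hx (hxy.trans hx)).2 (abs_nonneg _)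
    have hG2 : dist x y * ‖a (τ x)‖ ≤ ‖Q x x - Q x y‖ := by
      refine lp_ge _ _ _ (by positivity) fun i => ?_
      rw [lp.coeFn_sub, Pi.sub_apply, hQ, hQ, ← smul_sub, norm_smul, Real.norm_eq_abs,
        mul_comm |_|]
      by_cases h : a (τ x) i = 0
      · rw [h]; simp
      have hx := hball x i h
      exact mul_le_mul_of_nonneg_right (hgd i x y hx (hxy.trans hx)).1 (abs_nonneg _)
    have hH : ‖Q x y - Q y y‖ ≤ (C * dist y O) * ‖a (τ x) - a (τ y)‖ := by
      refine lp_le _ _ _ (by positivity) fun i => ?_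
      rw [lp.coeFn_sub, Pi.sub_apply, hQ, hQ, ← sub_smul, norm_smul, Real.norm_eq_abs, mul_comm,
        lp.coeFn_sub, Pi.sub_apply]
      by_cases hx : a (τ x) i = 0
      · by_cases hy : a (τ y) i = 0
        · rw [hx, hy]; simp
        · exact mul_le_mul_of_nonneg_right (hgn i y (hball y i hy)) (abs_nonneg _)
      · exact mul_le_mul_of_nonneg_right (hgn i y (hxy.trans (hball x i hx))) (abs_nonneg _)
    have ht : dist y O * |τ x - τ y| ≤ δ * dist x y := by
      have hy0 := dist_nonneg (x := y) (y := O)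
      have h1 : |τ x - τ y| = δ * Real.log ((1 + dist x O) / (1 + dist y O)) := by
        rw [Real.log_div (by linarith) (by linarith), mul_sub]
        apply abs_of_nonneg
        have := Real.log_le_log (by linarith : 0 < 1 + dist y O) (by linarith : 1 + dist y O ≤ 1 + dist x O)
        have := mul_le_mul_of_nonneg_left this hδ.le
        simp only [hτ]; linarith
      have h2 := Real.log_le_sub_one_of_pos
        (div_pos (by linarith : 0 < 1 + dist x O) (by linarith : 0 < 1 + dist y O))
      have h3 : (1 + dist x O) / (1 + dist y O) - 1 = (dist x O - dist y O) / (1 + dist y O) := by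
        have : 1 + dist y O ≠ 0 := by linarith
        field_simp; ring
      have h4 := dist_triangle x y O
      have h5 : dist y O * ((dist x O - dist y O) / (1 + dist y O)) ≤ dist x y := by
        rw [← mul_div_assoc, div_le_iff₀ (by linarith)]
        have hd := dist_nonneg (x := x) (y := y)
        nlinarith
      rw [h3] at h2
      have h6 := mul_le_mul_of_nonneg_left h2 hy0
      rw [h1]
      nlinarith
    have hH2 : ‖Q x y - Q y y‖ ≤ 16 * δ * C * dist x y := by
      have h1 := ha2 _ _ (hτ0 x) (hτ0 y)
      calc _ ≤ (C * dist y O) * ‖a (τ x) - a (τ y)‖ := hH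
        _ ≤ (C * dist y O) * (16 * |τ x - τ y|) := mul_le_mul_of_nonneg_left h1 (by positivity)
        _ = 16 * C * (dist y O * |τ x - τ y|) := by ring
        _ ≤ 16 * C * (δ * dist x y) := mul_le_mul_of_nonneg_left ht (by positivity)
        _ = _ := by ring
    rw [ha1 _ (hτ0 x), mul_one] at hG1 hG2
    constructor
    · have h1 : ‖Q x x - Q x y‖ ≤ ‖Q x x - Q y y‖ + ‖Q x y - Q y y‖ := by
        have := norm_sub_le (Q x x - Q y y) (Q x y - Q y y)
        rwa [sub_sub_sub_cancel_right] at this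
      linarith
    · have h1 := norm_add_le (Q x x - Q x y) (Q x y - Q y y)
      rw [← e] at h1
      linarith
  refine ⟨fun x => glue (Q x x), 1 - 16 * δ * C, by linarith, fun u v => ?_⟩
  have key : (1 - 16 * δ * C) * dist u v ≤ ‖Q u u - Q v v‖ ∧
      ‖Q u u - Q v v‖ ≤ (C + 16 * δ * C) * dist u v := by
    rcases le_total (dist v O) (dist u O) with h | h
    · exact main u v h
    · rw [dist_comm u v, norm_sub_rev]; exact main v u h
  rw [glue_dist]
  exact ⟨key.1, key.2.trans (mul_le_mul_of_nonneg_right hδ2 dist_nonneg)⟩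

end partone

theorem ellp_D_eq_one_plus
    (p : ℝ≥0∞) [Fact (1 ≤ p)] (hp1 : 1 < p) (hptop : p ≠ ∞) (hp2 : p ≠ 2) :
    (∀ (ε C : ℝ), 0 < ε → 1 ≤ C →
      ∀ (A : Type*) [MetricSpace A], MetricLocallyFinite A →
        (∀ S : Set A, S.Finite →
          ∃ f : S → lp (fun _ : ℕ => ℝ) p, IsBilipschitzEmbedding C f) →
        ∃ f : A → lp (fun _ : ℕ => ℝ) p, IsBilipschitzEmbedding ((1 + ε) * C) f) ∧
    (∃ (M : Type) (_ : MetricSpace M), MetricLocallyFinite M ∧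
      (∀ S : Set M, S.Finite → ∃ f : S → lp (fun _ : ℕ => ℝ) p, Isometry f) ∧
      ¬ ∃ f : M → lp (fun _ : ℕ => ℝ) p, Isometry f) := by
  haveI : Fact (p ≠ ∞) := ⟨hptop⟩
  refine ⟨?_, part_two hp1 hp2⟩
  intro ε C hε hC A _ hA hfin
  exact part_one ε C hε hC A hA hfin
end

section
/- There exists a locally finite metric space M such that every finite subset of M admits an isometric embedding into ℓ_1, yet M itself admits no isometric embedding into ℓ_1. -/
open scoped ENNReal

namespace EllOne

noncomputable section

/-- indicator of the cell j at level N in the n-level interval k -/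
def chi (N : ℕ) (x : ℕ × ℕ) (j : ℕ) : ℝ := if j / 2 ^ (N - x.1) = x.2 then 1 else 0

def D (N : ℕ) (x y : ℕ × ℕ) : ℝ :=
  ∑ j ∈ Finset.range (2 ^ N), (2 ^ N : ℝ)⁻¹ * |chi N x j - chi N y j|

def pv (x : ℕ × ℕ) : ℝ := ((x.1 + (x.2 - 1) : ℕ) : ℝ)

def dd (x y : ℕ × ℕ) : ℝ := D (max x.1 y.1) x y + if x = y then 0 else pv x + pv y

lemma sum_half (h : ℕ → ℝ) (m : ℕ) :
    ∑ j ∈ Finset.range (2 * m), h (j / 2) = 2 * ∑ j ∈ Finset.range m, h j := by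
  induction m with
  | zero => simp
  | succ m ih =>
    rw [show 2 * (m + 1) = 2 * m + 1 + 1 by ring, Finset.sum_range_succ, Finset.sum_range_succ, ih,
      Finset.sum_range_succ, show (2 * m + 1) / 2 = m by omega, show 2 * m / 2 = m by omega]
    ring

lemma chi_succ {N : ℕ} {x : ℕ × ℕ} (h : x.1 ≤ N) (j : ℕ) :
    chi (N + 1) x j = chi N x (j / 2) := by
  unfold chi
  rw [Nat.div_div_eq_div_mul, show N + 1 - x.1 = (N - x.1) + 1 by omega, pow_succ']

lemma D_succ {N : ℕ} {x y : ℕ × ℕ} (hx : x.1 ≤ N) (hy : y.1 ≤ N) : D (N + 1) x y = D N x y := by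
  unfold D
  simp only [chi_succ hx, chi_succ hy]
  rw [pow_succ', sum_half (fun j => (2 ^ (N + 1) : ℝ)⁻¹ * |chi N x j - chi N y j|),
    Finset.mul_sum]
  refine Finset.sum_congr rfl fun j _ => ?_
  rw [pow_succ]
  field_simp

lemma D_eq {N : ℕ} {x y : ℕ × ℕ} (hx : x.1 ≤ N) (hy : y.1 ≤ N) :
    D (max x.1 y.1) x y = D N x y := by
  have : max x.1 y.1 ≤ N := by omega
  induction N, this using Nat.le_induction with
  | base => rfl
  | succ N hN ih => rw [D_succ (by omega) (by omega)]; exact ih (by omega) (by omega)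

lemma pv_nonneg (x : ℕ × ℕ) : 0 ≤ pv x := Nat.cast_nonneg _

lemma D_nonneg (N : ℕ) (x y : ℕ × ℕ) : 0 ≤ D N x y :=
  Finset.sum_nonneg fun _ _ => by positivity

lemma D_comm (N : ℕ) (x y : ℕ × ℕ) : D N x y = D N y x := by
  unfold D; simp only [abs_sub_comm]

lemma D_tri (N : ℕ) (x y z : ℕ × ℕ) : D N x z ≤ D N x y + D N y z := by
  unfold D
  rw [← Finset.sum_add_distrib]
  refine Finset.sum_le_sum fun j _ => ?_
  rw [← mul_add]
  gcongr
  exact abs_sub_le _ _ _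

lemma D_self (N : ℕ) (x : ℕ × ℕ) : D N x x = 0 := by simp [D]

lemma dd_eq (N : ℕ) (x y : ℕ × ℕ) (hx : x.1 ≤ N) (hy : y.1 ≤ N) :
    dd x y = D N x y + if x = y then 0 else pv x + pv y := by
  unfold dd; rw [D_eq hx hy]

lemma dd_tri (x y z : ℕ × ℕ) : dd x z ≤ dd x y + dd y z := by
  let N := x.1 + y.1 + z.1
  rw [dd_eq N x z (by omega) (by omega), dd_eq N x y (by omega) (by omega),
    dd_eq N y z (by omega) (by omega)]
  have := D_tri N x y z
  have := pv_nonneg x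
  have := pv_nonneg y
  have := pv_nonneg z
  split_ifs <;> first | linarith | (subst_vars; simp_all) | (subst_vars; linarith)

lemma chi_o (n j : ℕ) (hj : j < 2 ^ n) : chi n (0, 1) j = 0 := by
  simp [chi, Nat.div_eq_of_lt hj]

lemma chi_u (n j : ℕ) (hj : j < 2 ^ n) : chi n (0, 0) j = 1 := by
  simp only [chi, Nat.sub_zero, Nat.div_eq_of_lt hj, if_true]

lemma chi_v (n k j : ℕ) : chi n (n, k) j = if j = k then 1 else 0 := by
  simp [chi]

lemma dd_ou : dd (0, 1) (0, 0) = 1 := by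
  simp [dd, D, chi, pv]

lemma dd_ov (n k : ℕ) (hn : 1 ≤ n) (hk : k < 2 ^ n) :
    dd (0, 1) (n, k) = (2 ^ n : ℝ)⁻¹ + pv (n, k) := by
  rw [dd_eq n _ _ (by simp) le_rfl, if_neg (by simp; omega)]
  have : D n (0, 1) (n, k) = (2 ^ n : ℝ)⁻¹ := by
    unfold D
    rw [Finset.sum_eq_single k]
    · rw [chi_o n k hk, chi_v]; simp
    · intro j hj hjk
      rw [chi_o n j (Finset.mem_range.1 hj), chi_v]; simp [hjk]
    · intro h; simp [hk] at h
  rw [this]; simp [pv]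

lemma dd_uv (n k : ℕ) (hn : 1 ≤ n) (hk : k < 2 ^ n) :
    dd (0, 0) (n, k) = 1 - (2 ^ n : ℝ)⁻¹ + pv (n, k) := by
  rw [dd_eq n _ _ (by simp) le_rfl, if_neg (by simp; omega)]
  have : D n (0, 0) (n, k) = 1 - (2 ^ n : ℝ)⁻¹ := by
    unfold D
    have : ∀ j ∈ Finset.range (2 ^ n), (2 ^ n : ℝ)⁻¹ * |chi n (0, 0) j - chi n (n, k) j| =
        (2 ^ n : ℝ)⁻¹ - if j = k then (2 ^ n : ℝ)⁻¹ else 0 := by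
      intro j hj
      rw [chi_u n j (Finset.mem_range.1 hj), chi_v]
      split_ifs <;> simp
    rw [Finset.sum_congr rfl this, Finset.sum_sub_distrib]
    simp [hk]
  rw [this]; simp [pv]

lemma dd_vv (n k l : ℕ) (hk : k < 2 ^ n) (hl : l < 2 ^ n) (hkl : k ≠ l) :
    dd (n, k) (n, l) = 2 * (2 ^ n : ℝ)⁻¹ + pv (n, k) + pv (n, l) := by
  rw [dd_eq n _ _ le_rfl le_rfl, if_neg (by simp [hkl])]
  have : D n (n, k) (n, l) = 2 * (2 ^ n : ℝ)⁻¹ := by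
    unfold D
    have : ∀ j ∈ Finset.range (2 ^ n), (2 ^ n : ℝ)⁻¹ * |chi n (n, k) j - chi n (n, l) j| =
        (if j = k then (2 ^ n : ℝ)⁻¹ else 0) + if j = l then (2 ^ n : ℝ)⁻¹ else 0 := by
      intro j hj
      rw [chi_v, chi_v]
      split_ifs <;> first | omega | simp
    rw [Finset.sum_congr rfl this, Finset.sum_add_distrib]
    simp [hk, hl]; ring
  rw [this]; ring

lemma dd_comm (x y : ℕ × ℕ) : dd x y = dd y x := by
  unfold dd
  rw [D_comm, max_comm, add_comm (pv x)]
  simp only [eq_comm]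

lemma dd_ge (x y : ℕ × ℕ) (h : x ≠ y) : pv x + pv y ≤ dd x y := by
  unfold dd
  rw [if_neg h]
  linarith [D_nonneg (max x.1 y.1) x y]

lemma pv_zero {x : ℕ × ℕ} (h : pv x ≤ 0) : x = (0, 0) ∨ x = (0, 1) := by
  obtain ⟨a, b⟩ := x
  unfold pv at h
  have : a + (b - 1) ≤ 0 := by exact_mod_cast h
  simp only [Prod.mk.injEq]
  omega

lemma dd_zero (x y : ℕ × ℕ) (h : dd x y = 0) : x = y := by
  by_contra hne
  have h1 := dd_ge x y hne
  have h2 := pv_nonneg x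
  have h3 := pv_nonneg y
  have h4 := dd_ou
  have h5 := dd_comm (0, 0) (0, 1)
  rcases pv_zero (x := x) (by linarith) with rfl | rfl <;>
  rcases pv_zero (x := y) (by linarith) with rfl | rfl
  · exact hne rfl
  · linarith
  · linarith
  · exact hne rfl

lemma dd_self (x : ℕ × ℕ) : dd x x = 0 := by simp [dd, D_self]

/-- the metric space -/
def Pt : Type := ℕ × ℕ

instance met : MetricSpace Pt where
  dist := dd
  dist_self := dd_self
  dist_comm := dd_comm
  dist_triangle := dd_tri
  eq_of_dist_eq_zero {x y} h := dd_zero x y h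

lemma finite_embed {ι : Type} [Fintype ι] {S : Type} (G : S → ι → ℝ) :
    ∃ f : S → lp (fun _ : ℕ => ℝ) 1, ∀ x y, dist (f x) (f y) = ∑ i, |G x i - G y i| := by
  obtain ⟨e, he⟩ := Countable.exists_injective_nat ι
  have hz : ∀ (φ : ι → ℝ) (n : ℕ), n ∉ Set.range e → Function.extend e φ 0 n = 0 := by
    intro φ n hn
    rw [Function.extend_apply' _ _ _ (by simpa using hn)]; rfl
  have hm : ∀ φ : ι → ℝ, Memℓp (E := fun _ : ℕ => ℝ) (Function.extend e φ 0) 1 := by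
    intro φ
    apply memℓp_gen
    apply summable_of_finite_support
    refine (Set.finite_range e).subset ?_
    intro n hn
    by_contra h
    apply hn
    simp [hz φ n h]
  refine ⟨fun x => ⟨Function.extend e (G x) 0, hm _⟩, fun x y => ?_⟩
  rw [dist_eq_norm, lp.norm_eq_tsum_rpow (by simp)]
  simp only [ENNReal.toReal_one, Real.rpow_one, div_one, lp.coeFn_sub, Pi.sub_apply,
    Real.norm_eq_abs]
  rw [← he.tsum_eq, tsum_fintype]
  · simp [he.extend_apply]
  · intro n hn
    by_contra h
    apply hn
    simp [hz _ n h]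

lemma priv_sum {S : Type} [Fintype S] [DecidableEq S] (p : S → ℝ) (hp : ∀ s, 0 ≤ p s) (x y : S) :
    ∑ s, |(if s = x then p x else 0) - (if s = y then p y else 0)| =
      if x = y then 0 else p x + p y := by
  split_ifs with h
  · subst h; simp
  · have : ∀ s, |(if s = x then p x else 0) - (if s = y then p y else 0)| =
        (if s = x then p x else 0) + (if s = y then p y else 0) := by
      intro s
      split_ifs with h1 h2 h2
      · exact absurd (h1.symm.trans h2) h
      · simp [hp]
      · simp [hp]
      · simp
    simp only [this, Finset.sum_add_distrib]
    simp

lemma fin_sub (S : Set (ℕ × ℕ)) (hS : S.Finite) :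
    ∃ f : S → lp (fun _ : ℕ => ℝ) 1, ∀ x y : S, dist (f x) (f y) = dd x y := by
  classical
  haveI : Fintype S := hS.fintype
  obtain ⟨N, hN⟩ : ∃ N, ∀ x : S, x.1.1 ≤ N :=
    ⟨∑ x : S, x.1.1, fun x => Finset.single_le_sum (f := fun x : S => x.1.1)
      (fun _ _ => Nat.zero_le _) (Finset.mem_univ x)⟩
  obtain ⟨f, hf⟩ := finite_embed (ι := Fin (2 ^ N) ⊕ S) (S := S)
    (fun x => Sum.elim (fun j => (2 ^ N : ℝ)⁻¹ * chi N x j)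
      (fun s => if s = x then pv x else 0))
  refine ⟨f, fun x y => ?_⟩
  rw [hf, dd_eq N _ _ (hN x) (hN y), Fintype.sum_sum_type]
  simp only [Sum.elim_inl, Sum.elim_inr]
  rw [priv_sum (fun s : S => pv s) (fun s => pv_nonneg _)]
  simp only [Subtype.ext_iff]
  congr 1
  unfold D
  rw [Finset.sum_range]
  refine Finset.sum_congr rfl fun j _ => ?_
  rw [← mul_sub, abs_mul, abs_of_nonneg (by positivity)]

def g (s t : ℝ) : ℝ := |s| + |t| - |s - t|

lemma g_nonneg (s t : ℝ) : 0 ≤ g s t := by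
  unfold g; linarith [abs_sub s t]

lemma g_pos {s t : ℝ} (h : g s t ≠ 0) : 0 < s * t := by
  by_contra hc
  apply h
  unfold g
  rcases mul_nonpos_iff.1 (not_lt.1 hc) with ⟨h1, h2⟩ | ⟨h1, h2⟩
  · rw [abs_of_nonneg h1, abs_of_nonpos h2, abs_of_nonneg (by linarith)]; ring
  · rw [abs_of_nonpos h1, abs_of_nonneg h2, abs_of_nonpos (by linarith)]; ring

lemma g_ne {s t : ℝ} (h : 0 < s * t) : g s t ≠ 0 := by
  unfold g
  rcases mul_pos_iff.1 h with ⟨h1, h2⟩ | ⟨h1, h2⟩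
  · rw [abs_of_pos h1, abs_of_pos h2]
    rcases abs_cases (s - t) with ⟨h, _⟩ | ⟨h, _⟩ <;> rw [h] <;> intro h <;> linarith
  · rw [abs_of_neg h1, abs_of_neg h2]
    rcases abs_cases (s - t) with ⟨h, _⟩ | ⟨h, _⟩ <;> rw [h] <;> intro h <;> linarith

lemma g_le (s t : ℝ) : g s t ≤ 2 * |s| := by
  unfold g
  have := abs_sub_abs_le_abs_sub t s
  rw [abs_sub_comm] at this
  linarith

lemma hasSum_abs (a : lp (fun _ : ℕ => ℝ) 1) : HasSum (fun i => |a i|) ‖a‖ := by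
  have := lp.hasSum_norm (p := 1) (by simp) a
  simpa using this

lemma hasSum_g (a b : lp (fun _ : ℕ => ℝ) 1) :
    HasSum (fun i => g (a i) (b i)) (‖a‖ + ‖b‖ - ‖a - b‖) := by
  have := ((hasSum_abs a).add (hasSum_abs b)).sub (hasSum_abs (a - b))
  simpa [g] using this

/-- key combinatorial fact for coordinates -/
lemma sum_g_le {K : Finset ℕ} (s C : ℝ) (hC : 0 ≤ C) (b : ℕ → ℝ)
    (hb : ∀ k ∈ K, ∀ l ∈ K, k ≠ l → g (b k) (b l) = 0) (h : ∀ k ∈ K, g s (b k) ≤ C) :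
    ∑ k ∈ K, g s (b k) ≤ C := by
  by_cases hk : ∃ k ∈ K, g s (b k) ≠ 0
  · obtain ⟨k, hkK, hk⟩ := hk
    rw [Finset.sum_eq_single_of_mem k hkK]
    · exact h k hkK
    · intro l hl hlk
      by_contra hne
      apply g_ne _ (hb l hl k hkK hlk)
      have h1 := g_pos hk
      have h2 := g_pos hne
      have : 0 < s ^ 2 * (b l * b k) := by nlinarith
      exact pos_of_mul_pos_right this (sq_nonneg s)
  · push Not at hk
    rw [Finset.sum_eq_zero hk]; exact hC

lemma no_embed (f : ℕ × ℕ → lp (fun _ : ℕ => ℝ) 1) (hf : ∀ x y, dist (f x) (f y) = dd x y) :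
    False := by
  set a := f (0, 0) - f (0, 1) with ha
  have hna : ‖a‖ = 1 := by rw [ha, ← dist_eq_norm, hf, dd_comm, dd_ou]
  have key : ∀ (n : ℕ), 1 ≤ n → ∀ i, 2 * |a i| ≤ 2 * (2 ^ n : ℝ)⁻¹ := by
    intro n hn i
    let b : ℕ → lp (fun _ : ℕ => ℝ) 1 := fun k => f (n, k) - f (0, 1)
    have hnb : ∀ k < 2 ^ n, ‖b k‖ = (2 ^ n : ℝ)⁻¹ + pv (n, k) := by
      intro k hk
      rw [← dist_eq_norm, hf, dd_comm, dd_ov n k hn hk]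
    have hab : ∀ k < 2 ^ n, HasSum (fun i => g (a i) (b k i)) (2 * (2 ^ n : ℝ)⁻¹) := by
      intro k hk
      convert hasSum_g a (b k) using 1
      have : ‖a - b k‖ = dd (0, 0) (n, k) := by
        rw [← hf, dist_eq_norm]; simp [a, b]
      rw [this, dd_uv n k hn hk, hna, hnb k hk]; ring
    have hbb : ∀ k < 2 ^ n, ∀ l < 2 ^ n, k ≠ l → ∀ i, g (b k i) (b l i) = 0 := by
      intro k hk l hl hkl
      have h1 := hasSum_g (b k) (b l)
      have : ‖b k - b l‖ = dd (n, k) (n, l) := by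
        rw [← hf, dist_eq_norm]; simp [b]
      rw [this, dd_vv n k l hk hl hkl, hnb k hk, hnb l hl] at h1
      ring_nf at h1
      have := (hasSum_zero_iff_of_nonneg (fun i => g_nonneg _ _)).1 h1
      exact fun i => congrFun this i
    have hsum : HasSum (fun i => 2 * |a i| - ∑ k ∈ Finset.range (2 ^ n), g (a i) (b k i)) 0 := by
      have h1 := ((hasSum_abs a).mul_left 2).sub
        (hasSum_sum (s := Finset.range (2 ^ n)) fun k hk => hab k (Finset.mem_range.1 hk))
      have h2 : 2 * ‖a‖ - ∑ i ∈ Finset.range (2 ^ n), 2 * (2 ^ n : ℝ)⁻¹ = 0 := by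
        rw [hna]; simp
        field_simp; ring
      rw [h2] at h1
      exact h1
    have hz := (hasSum_zero_iff_of_nonneg (fun i => by
      simp only [Pi.zero_apply, sub_nonneg]
      refine sum_g_le (a i) _ (by positivity) (fun k => b k i) ?_ (fun k _ => g_le _ _)
      intro k hk l hl hkl
      exact hbb k (Finset.mem_range.1 hk) l (Finset.mem_range.1 hl) hkl i)).1 hsum
    have hzi := congrFun hz i
    simp only [Pi.zero_apply, sub_eq_zero] at hzi
    rw [hzi]
    refine sum_g_le (a i) _ (by positivity) (fun k => b k i) ?_ ?_
    · intro k hk l hl hkl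
      exact hbb k (Finset.mem_range.1 hk) l (Finset.mem_range.1 hl) hkl i
    · intro k hk
      exact le_hasSum (hab k (Finset.mem_range.1 hk)) i (fun j _ => g_nonneg _ _)
  have hzero : ∀ i, |a i| = 0 := by
    intro i
    by_contra hne
    have hpos : 0 < |a i| := lt_of_le_of_ne (abs_nonneg _) (Ne.symm hne)
    obtain ⟨n, hn⟩ := exists_pow_lt_of_lt_one hpos (show (1 / 2 : ℝ) < 1 by norm_num)
    have h1 := key (n + 1) (by omega) i
    rw [pow_succ, mul_inv, ← inv_pow] at h1
    rw [one_div] at hn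
    have : (0 : ℝ) < 2⁻¹ ^ n := by positivity
    linarith
  have h := hasSum_abs a
  simp only [hzero] at h
  have := h.unique hasSum_zero
  linarith

lemma loc_fin (x : ℕ × ℕ) (R : ℝ) : {y | dd y x ≤ R}.Finite := by
  obtain ⟨B, hB⟩ := exists_nat_ge R
  refine ((Set.finite_singleton x).union
    ((Set.finite_Iic (B + 1)).prod (Set.finite_Iic (B + 1)))).subset ?_
  intro y hy
  by_cases h : y = x
  · left; exact h
  · right
    have h1 := dd_ge y x h
    have h2 := pv_nonneg x
    have h3 : dd y x ≤ R := hy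
    have h4 : pv y ≤ B := by linarith
    have h5 : y.1 + (y.2 - 1) ≤ B := by unfold pv at h4; exact_mod_cast h4
    simp only [Set.mem_prod, Set.mem_Iic]
    omega

end

end EllOne

theorem ell1_not_isometrically_finitely_determined :
    ∃ (M : Type) (_ : MetricSpace M), MetricLocallyFinite M ∧
      (∀ S : Set M, S.Finite → ∃ f : S → lp (fun _ : ℕ => ℝ) 1, Isometry f) ∧
      ¬ ∃ f : M → lp (fun _ : ℕ => ℝ) 1, Isometry f := by
  refine ⟨EllOne.Pt, EllOne.met, fun x R => EllOne.loc_fin x R, fun S hS => ?_, ?_⟩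
  · obtain ⟨f, hf⟩ := EllOne.fin_sub S hS
    exact ⟨f, Isometry.of_dist_eq (α := S) hf⟩
  · rintro ⟨f, hf⟩
    exact EllOne.no_embed f fun x y => hf.dist_eq x y
end

section
/- Let Z be a finite-dimensional real normed space and F a real Banach space. For every ε > 0 there exists δ > 0 (depending on ε, Z, F) such that: if N is a δ-net of the closed unit ball B_Z of Z and N admits an isometric embedding into F, then there exists an injective continuous linear map T : Z → F satisfying ‖z‖ ≤ ‖T z‖ ≤ (1+ε)‖z‖ for all z ∈ Z; in particular F contains a linear subspace whose Banach–Mazur distance to Z does not exceed 1+ε. -/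
open MeasureTheory Metric

theorem smoothing_aux {Z F : Type*} [NormedAddCommGroup Z] [NormedSpace ℝ Z]
    [FiniteDimensional ℝ Z] [NormedAddCommGroup F] [NormedSpace ℝ F] [CompleteSpace F]
    [MeasurableSpace Z] [BorelSpace Z] (ε : ℝ) (hε : 0 < ε) :
    ∃ α : ℝ, 0 < α ∧ ∀ g : Z → F, StronglyMeasurable g → (∃ C, ∀ x, ‖g x‖ ≤ C) → g 0 = 0 →
      (∀ x ∈ closedBall (0 : Z) 2, ∀ x' ∈ closedBall (0 : Z) 2, ‖g x - g x'‖ ≤ ‖x - x'‖ + α) →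
      ∃ T : Z →L[ℝ] F, (∀ y, ‖T y‖ ≤ (1 + ε) * ‖y‖) ∧
        ∀ (p : F →L[ℝ] ℝ) (l : Z →L[ℝ] ℝ) (c : ℝ),
          (∀ x ∈ closedBall (0 : Z) 1, |p (g x) - c - l x| ≤ α) →
          ∀ y, |p (T y) - l y| ≤ ε * ‖y‖ := by
  let μ : Measure Z := Measure.addHaar
  let b : ContDiffBump (0 : Z) := ⟨1/2, 1, by norm_num, by norm_num⟩
  obtain ⟨φ, hφ⟩ : ∃ φ : Z → ℝ, φ = b.normed μ := ⟨_, rfl⟩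
  have hφ0 : ∀ x, 0 ≤ φ x := fun x => hφ ▸ b.nonneg_normed x
  have hφ1 : ∫ x, φ x ∂μ = 1 := hφ ▸ b.integral_normed
  have hφs : ContDiff ℝ 1 φ := hφ ▸ b.contDiff_normed
  have hφc : HasCompactSupport φ := hφ ▸ b.hasCompactSupport_normed
  have hφt : tsupport φ = closedBall 0 1 := hφ ▸ b.tsupport_normed_eq
  have hφi : Integrable φ μ := hφ ▸ b.integrable_normed
  have hφd : Differentiable ℝ φ := hφs.differentiable (by norm_num)
  have hDc : Continuous (fderiv ℝ φ) := hφs.continuous_fderiv (by norm_num)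
  have hDs : HasCompactSupport (fderiv ℝ φ) := hφc.fderiv (𝕜 := ℝ)
  have hDi : Integrable (fderiv ℝ φ) μ := hDc.integrable_of_hasCompactSupport hDs
  have hDyi : ∀ y, Integrable (fun x => fderiv ℝ φ x y) μ := fun y =>
    hDi.apply_continuousLinearMap y
  have hφz : ∀ x, 1 < ‖x‖ → φ x = 0 := fun x hx => image_eq_zero_of_notMem_tsupport (by
    rw [hφt]; simpa using hx)
  have hDz : ∀ x, 1 < ‖x‖ → fderiv ℝ φ x = 0 := fun x hx => by
    have : x ∉ tsupport φ := by rw [hφt]; simpa using hx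
    exact image_eq_zero_of_notMem_tsupport (fun h => this (tsupport_fderiv_subset ℝ h))
  have hDu : UniformContinuous (fderiv ℝ φ) := hDs.uniformContinuous_of_continuous hDc
  obtain ⟨V, hV⟩ : ∃ V, V = μ.real (closedBall (0 : Z) 2) := ⟨_, rfl⟩
  have hV0 : 0 ≤ V := hV ▸ measureReal_nonneg
  obtain ⟨I, hI⟩ : ∃ I, I = ∫ x, ‖fderiv ℝ φ x‖ ∂μ := ⟨_, rfl⟩
  have hI0 : 0 ≤ I := hI ▸ integral_nonneg (fun x => norm_nonneg _)
  obtain ⟨η, hη⟩ : ∃ η, η = ε / (2 * (3 * V + 1)) := ⟨_, rfl⟩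
  have hη0 : 0 < η := hη ▸ by positivity
  have hηV : 3 * V * η ≤ ε / 2 := by
    rw [hη, mul_div_assoc', div_le_div_iff₀ (by positivity) (by norm_num)]
    nlinarith
  obtain ⟨d, hd0, hd⟩ := Metric.uniformContinuous_iff.1 hDu η hη0
  obtain ⟨s, hs⟩ : ∃ s, s = min (d / 2) 1 := ⟨_, rfl⟩
  have hs0 : 0 < s := hs ▸ by positivity
  have hs1 : s ≤ 1 := hs ▸ min_le_right _ _
  have hsd : s < d := by have : s ≤ d / 2 := hs ▸ min_le_left _ _
                         linarith
  obtain ⟨α, hα⟩ : ∃ α, α = min 1 (min (s * ε / 2) (ε / (I + 1))) := ⟨_, rfl⟩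
  have hα0 : 0 < α := hα ▸ by positivity
  have hα1 : α ≤ 1 := hα ▸ min_le_left _ _
  have hα2 : α ≤ s * ε / 2 := hα ▸ (min_le_right _ _).trans (min_le_left _ _)
  have hα3 : α * I ≤ ε := by
    have : α ≤ ε / (I + 1) := hα ▸ (min_le_right _ _).trans (min_le_right _ _)
    rw [le_div_iff₀ (by positivity)] at this
    nlinarith
  -- Taylor estimate
  have taylor : ∀ x y : Z, ‖y‖ ≤ 1 →
      |φ (x - s • y) - φ x + s * fderiv ℝ φ x y| ≤ η * s := by
    intro x y hy
    have hsy : ‖s • y‖ ≤ s := by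
      rw [norm_smul, Real.norm_of_nonneg hs0.le]; nlinarith
    have := (convex_closedBall x s).norm_image_sub_le_of_norm_fderiv_le' (𝕜 := ℝ) (f := φ)
      (φ := fderiv ℝ φ x) (C := η) (x := x) (y := x - s • y) (fun z _ => hφd z)
      (fun z hz => by
        rw [← dist_eq_norm]
        exact (hd (lt_of_le_of_lt (mem_closedBall.1 hz) hsd)).le)
      (mem_closedBall_self hs0.le) (by simpa [dist_eq_norm] using hsy)
    have h2 : φ (x - s • y) - φ x - fderiv ℝ φ x (x - s • y - x)
        = φ (x - s • y) - φ x + s * fderiv ℝ φ x y := by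
      simp
    rw [h2, Real.norm_eq_abs] at this
    refine this.trans ?_
    gcongr
    simpa using hsy
  refine ⟨α, hα0, ?_⟩
  rintro g hgm ⟨C, hC⟩ hg0 hg
  have smi : ∀ u : Z → ℝ, Integrable u μ → Integrable (fun x => u x • g x) μ := fun u hu =>
    hu.smul_bdd C hgm.aestronglyMeasurable (Filter.Eventually.of_forall hC)
  let T₀ : Z →ₗ[ℝ] F :=
    { toFun := fun y => -∫ x, fderiv ℝ φ x y • g x ∂μ
      map_add' := fun y y' => by
        simp only [map_add, add_smul]
        rw [integral_add (smi _ (hDyi y)) (smi _ (hDyi y')), neg_add]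
      map_smul' := fun r y => by
        simp only [map_smul, smul_assoc, integral_smul, RingHom.id_apply, smul_neg] }
  have hT₀ : ∀ y, LinearMap.toContinuousLinearMap T₀ y = -∫ x, fderiv ℝ φ x y • g x ∂μ :=
    fun y => rfl
  have unit_bound : ∀ y : Z, ‖y‖ ≤ 1 → ‖LinearMap.toContinuousLinearMap T₀ y‖ ≤ 1 + ε := by
    intro y hy
    have hsy : ‖s • y‖ ≤ s := by
      rw [norm_smul, Real.norm_of_nonneg hs0.le]; nlinarith
    have i1 : Integrable (fun x => φ (x - s • y)) μ := hφi.comp_sub_right (s • y)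
    have key : s • (LinearMap.toContinuousLinearMap T₀ y)
        = (∫ x, φ x • (g (x + s • y) - g x) ∂μ)
          - ∫ x, (φ (x - s • y) - φ x + s * fderiv ℝ φ x y) • g x ∂μ := by
      have e1 : ∫ x, φ x • g (x + s • y) ∂μ = ∫ x, φ (x - s • y) • g x ∂μ := by
        rw [← integral_add_right_eq_self (fun x => φ (x - s • y) • g x) (s • y)]
        simp
      have i2 : Integrable (fun x => φ x • g (x + s • y)) μ := by
        have := (smi _ i1).comp_add_right (s • y)
        simpa using this
      have e2 : ∫ x, φ x • (g (x + s • y) - g x) ∂μ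
          = ∫ x, φ (x - s • y) • g x ∂μ - ∫ x, φ x • g x ∂μ := by
        simp only [smul_sub]
        rw [integral_sub i2 (smi _ hφi), e1]
      have e3 : ∫ x, (φ (x - s • y) - φ x + s * fderiv ℝ φ x y) • g x ∂μ
          = ∫ x, φ (x - s • y) • g x ∂μ - ∫ x, φ x • g x ∂μ
            + s • ∫ x, fderiv ℝ φ x y • g x ∂μ := by
        simp only [add_smul, sub_smul, mul_smul]
        rw [integral_add, integral_sub (smi _ i1) (smi _ hφi), integral_smul]
        · exact (smi _ i1).sub (smi _ hφi)
        · exact (smi _ (hDyi y)).smul s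
      rw [e2, e3, hT₀, smul_neg]
      abel
    have b1 : ‖∫ x, φ x • (g (x + s • y) - g x) ∂μ‖ ≤ s + α := by
      have : ∫ x, φ x * (s + α) ∂μ = s + α := by
        rw [integral_mul_const, hφ1, one_mul]
      rw [← this]
      refine norm_integral_le_of_norm_le (hφi.mul_const _) (Filter.Eventually.of_forall ?_)
      intro x
      rw [norm_smul, Real.norm_of_nonneg (hφ0 x)]
      by_cases hx : 1 < ‖x‖
      · simp [hφz x hx]
      · push Not at hx
        refine mul_le_mul_of_nonneg_left ?_ (hφ0 x)
        refine (hg _ ?_ _ ?_).trans ?_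
        · rw [mem_closedBall_zero_iff]
          exact (norm_add_le _ _).trans (by linarith)
        · rw [mem_closedBall_zero_iff]; linarith
        · simpa using hsy
    have b2 : ‖∫ x, (φ (x - s • y) - φ x + s * fderiv ℝ φ x y) • g x ∂μ‖ ≤ s * (ε / 2) := by
      have hz : ∀ x, x ∉ closedBall (0 : Z) 2 →
          (φ (x - s • y) - φ x + s * fderiv ℝ φ x y) • g x = 0 := by
        intro x hx
        rw [mem_closedBall_zero_iff, not_le] at hx
        have h1 : 1 < ‖x - s • y‖ := by
          have := norm_sub_norm_le x (s • y)
          linarith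
        rw [hφz x (by linarith), hDz x (by linarith), hφz _ h1]
        simp
      rw [← setIntegral_eq_integral_of_forall_compl_eq_zero hz]
      refine (norm_setIntegral_le_of_norm_le_const (C := η * s * 3)
        (isCompact_closedBall (0 : Z) 2).measure_lt_top ?_).trans ?_
      · intro x hx
        rw [norm_smul, Real.norm_eq_abs]
        have h3 : ‖g x‖ ≤ 3 := by
          have := hg x hx 0 (by simp)
          rw [hg0, sub_zero, sub_zero] at this
          rw [mem_closedBall_zero_iff] at hx
          linarith
        exact mul_le_mul (taylor x y hy) h3 (norm_nonneg _) (by positivity)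
      · rw [← hV]; nlinarith
    have h5 : s * ‖LinearMap.toContinuousLinearMap T₀ y‖ ≤ s * (1 + ε) := by
      have : ‖s • (LinearMap.toContinuousLinearMap T₀ y)‖
          = s * ‖LinearMap.toContinuousLinearMap T₀ y‖ := by
        rw [norm_smul, Real.norm_of_nonneg hs0.le]
      rw [← this, key]
      refine (norm_sub_le _ _).trans ?_
      linarith
    exact le_of_mul_le_mul_left h5 hs0
  refine ⟨LinearMap.toContinuousLinearMap T₀, ?_, ?_⟩
  · intro y
    rcases eq_or_ne y 0 with rfl | hy
    · simp
    have hy' : 0 < ‖y‖ := norm_pos_iff.2 hy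
    have := unit_bound (‖y‖⁻¹ • y) (by rw [norm_smul, norm_inv, norm_norm, inv_mul_cancel₀ hy'.ne'])
    rw [map_smul, norm_smul, norm_inv, norm_norm, inv_mul_le_iff₀ hy'] at this
    linarith
  · intro p l c hp y
    have ibp : l y = -∫ x, fderiv ℝ φ x y * (c + l x) ∂μ := by
      have hcont : Continuous (fun x => c + l x) := by fun_prop
      have hfd : ∀ x, fderiv ℝ (fun x => c + l x) x y = l y := by
        intro x
        rw [fderiv_const_add, ContinuousLinearMap.fderiv]
      have := integral_mul_fderiv_eq_neg_fderiv_mul_of_integrable (μ := μ) (𝕜 := ℝ) (f := φ)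
        (g := fun x => c + l x) (v := y) ?_ ?_ ?_ (fun x _ => hφd x) (fun x _ => by fun_prop)
      · rw [← this]
        simp only [hfd]
        rw [integral_mul_const, hφ1, one_mul]
      · refine Continuous.integrable_of_hasCompactSupport ?_ ?_
        · fun_prop
        · refine HasCompactSupport.mul_right ?_
          exact hDs.comp_left (g := fun L : Z →L[ℝ] ℝ => L y) (by simp)
      · simp only [hfd]
        exact hφi.mul_const _
      · refine Continuous.integrable_of_hasCompactSupport ?_ ?_
        · exact hφd.continuous.mul hcont
        · exact hφc.mul_right
    have hpT : p (LinearMap.toContinuousLinearMap T₀ y) = -∫ x, fderiv ℝ φ x y * p (g x) ∂μ := by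
      rw [hT₀, map_neg, ← p.integral_comp_comm (smi _ (hDyi y))]
      simp
    have i3 : Integrable (fun x => fderiv ℝ φ x y * p (g x)) μ := by
      simpa using p.integrable_comp (smi _ (hDyi y))
    have i4 : Integrable (fun x => fderiv ℝ φ x y * (c + l x)) μ := by
      refine Continuous.integrable_of_hasCompactSupport ?_ ?_
      · fun_prop
      · refine HasCompactSupport.mul_right ?_
        exact hDs.comp_left (g := fun L : Z →L[ℝ] ℝ => L y) (by simp)
    have e5 : p (LinearMap.toContinuousLinearMap T₀ y) - l y
        = -∫ x, fderiv ℝ φ x y * (p (g x) - c - l x) ∂μ := by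
      rw [hpT, ibp, neg_sub_neg, ← integral_sub i4 i3, ← integral_neg]
      congr 1; ext x; ring
    rw [e5, abs_neg, ← Real.norm_eq_abs]
    calc _ ≤ ∫ x, ‖fderiv ℝ φ x‖ * (‖y‖ * α) ∂μ := by
          refine norm_integral_le_of_norm_le (hDi.norm.mul_const _) (Filter.Eventually.of_forall ?_)
          intro x
          by_cases hx : 1 < ‖x‖
          · simp [hDz x hx]
          · push Not at hx
            rw [norm_mul, ← mul_assoc]
            exact mul_le_mul ((fderiv ℝ φ x).le_opNorm y) (hp x (by simpa using hx))
              (norm_nonneg _) (by positivity)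
      _ = (α * I) * ‖y‖ := by rw [integral_mul_const, ← hI]; ring
      _ ≤ ε * ‖y‖ := by gcongr

theorem smooth_net_aux {Z : Type*} [NormedAddCommGroup Z] [NormedSpace ℝ Z]
    [FiniteDimensional ℝ Z] (η : ℝ) (hη : 0 < η) :
    ∃ S : Finset Z, (∀ z ∈ S, ‖z‖ = 1 ∧ DifferentiableAt ℝ (‖·‖) z) ∧
      ∀ u : Z, ‖u‖ = 1 → ∃ z ∈ S, ‖u - z‖ ≤ η := by
  have hc := (isCompact_sphere (0 : Z) 1).elim_finite_subcover_image
    (b := {z : Z | ‖z‖ = 1 ∧ DifferentiableAt ℝ (‖·‖) z}) (c := fun z => ball z η)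
    (fun _ _ => isOpen_ball) ?_
  · obtain ⟨b', hb, hf, hcov⟩ := hc
    refine ⟨hf.toFinset, fun z hz => hb (by simpa using hz), fun u hu => ?_⟩
    have := hcov (by simpa using hu : u ∈ sphere (0 : Z) 1)
    simp only [Set.mem_iUnion] at this
    obtain ⟨z, hz, huz⟩ := this
    refine ⟨z, by simpa using hz, ?_⟩
    rw [← dist_eq_norm]; exact (mem_ball.1 huz).le
  · intro u hu
    have hu1 : ‖u‖ = 1 := by simpa using hu
    obtain ⟨w, hw, hwu⟩ := (dense_differentiableAt_norm (E := Z)).exists_dist_lt u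
      (show (0 : ℝ) < min (η / 2) (1 / 2) by positivity)
    have h1 : ‖u - w‖ < η / 2 := by
      rw [← dist_eq_norm]; exact hwu.trans_le (min_le_left _ _)
    have h2 : ‖u - w‖ < 1 / 2 := by
      rw [← dist_eq_norm]; exact hwu.trans_le (min_le_right _ _)
    have h3 := norm_sub_norm_le u w
    have hw0 : 0 < ‖w‖ := by linarith
    simp only [Set.mem_iUnion]
    refine ⟨‖w‖⁻¹ • w, ⟨?_, ?_⟩, ?_⟩
    · rw [norm_smul, norm_inv, norm_norm, inv_mul_cancel₀ hw0.ne']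
    · exact (differentiableAt_norm_smul (inv_ne_zero hw0.ne')).1 hw
    · rw [mem_ball, dist_eq_norm]
      have h4 : ‖w - ‖w‖⁻¹ • w‖ ≤ ‖u - w‖ := by
        have : w - ‖w‖⁻¹ • w = (1 - ‖w‖⁻¹) • w := by rw [sub_smul, one_smul]
        rw [this, norm_smul, Real.norm_eq_abs]
        have h5 : |1 - ‖w‖⁻¹| * ‖w‖ = |‖w‖ - 1| := by
          nth_rw 2 [← abs_of_pos hw0]
          rw [← abs_mul, sub_mul, inv_mul_cancel₀ hw0.ne', one_mul]
        rw [h5, ← hu1, abs_sub_comm]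
        exact abs_norm_sub_norm_le u w
      calc ‖u - ‖w‖⁻¹ • w‖ = ‖(u - w) + (w - ‖w‖⁻¹ • w)‖ := by congr 1; abel
        _ ≤ _ := norm_add_le _ _
        _ < η := by linarith

theorem smooth_radius_aux {Z : Type*} [NormedAddCommGroup Z] [NormedSpace ℝ Z]
    (S : Finset Z) (hS : ∀ z ∈ S, ‖z‖ = 1 ∧ DifferentiableAt ℝ (‖·‖) z) (κ : ℝ) (hκ : 0 < κ) :
    ∃ r : ℝ, 0 < r ∧ ∀ z ∈ S, ∀ y : Z, ‖y‖ ≤ r →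
      ‖z + y‖ ≤ 1 + fderiv ℝ (‖·‖) z y + κ * ‖y‖ := by
  have : ∀ᶠ y in nhds (0 : Z), ∀ z ∈ S, ‖z + y‖ ≤ 1 + fderiv ℝ (‖·‖) z y + κ * ‖y‖ := by
    rw [Filter.eventually_all_finset]
    intro z hz
    have h := hasFDerivAt_iff_isLittleO_nhds_zero.1 (hS z hz).2.hasFDerivAt
    filter_upwards [h.def hκ] with y hy
    rw [Real.norm_eq_abs, (hS z hz).1] at hy
    linarith [le_abs_self (‖z + y‖ - 1 - fderiv ℝ (‖·‖) z y)]
  obtain ⟨r, hr, h⟩ := Metric.eventually_nhds_iff.1 this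
  refine ⟨r / 2, by positivity, fun z hz y hy => h ?_ z hz⟩
  rw [dist_zero_right]; linarith

theorem net_simple_aux {Z F : Type*} [NormedAddCommGroup Z] [NormedSpace ℝ Z]
    [FiniteDimensional ℝ Z] [NormedAddCommGroup F] [NormedSpace ℝ F]
    [MeasurableSpace Z] [BorelSpace Z] (δ : ℝ) (hδ : 0 < δ) (N : Set Z)
    (hN : N ⊆ closedBall (0 : Z) 1)
    (hnet : ∀ z ∈ closedBall (0 : Z) 1, ∃ y ∈ N, dist z y ≤ δ)
    (f : N → F) (hf : Isometry f) :
    ∃ G : SimpleFunc Z F, ∀ x ∈ closedBall (0 : Z) 1, ∀ x' ∈ closedBall (0 : Z) 1,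
      |‖G x - G x'‖ - ‖x - x'‖| ≤ 4 * δ := by
  have hc := (isCompact_closedBall (0 : Z) 1).elim_finite_subcover_image
    (b := N) (c := fun z => ball z (2 * δ)) (fun _ _ => isOpen_ball) (by
      intro z hz
      obtain ⟨y, hy, hzy⟩ := hnet z hz
      simp only [Set.mem_iUnion]
      exact ⟨y, hy, mem_ball.2 (by linarith)⟩)
  obtain ⟨t, htN, htf, hcov⟩ := hc
  have htne : t.Nonempty := by
    have := hcov (mem_closedBall_self zero_le_one)
    simp only [Set.mem_iUnion] at this
    obtain ⟨z, hz, _⟩ := this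
    exact ⟨z, hz⟩
  obtain ⟨e, he⟩ := htf.countable.exists_eq_range htne
  have heN : ∀ k, e k ∈ N := fun k => htN (he ▸ Set.mem_range_self k)
  have hM : ∃ M : ℕ, ∀ z ∈ t, ∃ k ≤ M, e k = z := by
    have : ∀ z ∈ t, ∃ k, e k = z := fun z hz => by rw [he] at hz; exact hz
    choose! k hk using this
    obtain ⟨M, hM⟩ := (htf.image k).bddAbove
    exact ⟨M, fun z hz => ⟨k z, hM ⟨z, hz, rfl⟩, hk z hz⟩⟩
  obtain ⟨M, hM⟩ := hM
  have hnear : ∀ x ∈ closedBall (0 : Z) 1,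
      dist (e (SimpleFunc.nearestPtInd e M x)) x ≤ 2 * δ := by
    intro x hx
    have := hcov hx
    simp only [Set.mem_iUnion] at this
    obtain ⟨z, hz, hxz⟩ := this
    obtain ⟨k, hk, rfl⟩ := hM z hz
    have h := SimpleFunc.edist_nearestPt_le e x hk
    rw [edist_dist, edist_dist, ENNReal.ofReal_le_ofReal_iff dist_nonneg] at h
    refine le_trans h ?_
    rw [dist_comm]; exact (mem_ball.1 hxz).le
  refine ⟨(SimpleFunc.nearestPtInd e M).map (fun k => f ⟨e k, heN k⟩), ?_⟩
  intro x hx x' hx'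
  simp only [SimpleFunc.map_apply]
  rw [← dist_eq_norm, hf.dist_eq, Subtype.dist_eq, ← dist_eq_norm]
  have := dist_dist_dist_le (e (SimpleFunc.nearestPtInd e M x))
    (e (SimpleFunc.nearestPtInd e M x')) x x'
  rw [Real.dist_eq] at this
  linarith [hnear x hx, hnear x' hx']

theorem isometric_embedding_of_net_gives_isomorphic_subspace
    {Z F : Type*} [NormedAddCommGroup Z] [NormedSpace ℝ Z] [FiniteDimensional ℝ Z]
    [NormedAddCommGroup F] [NormedSpace ℝ F] [CompleteSpace F]
    (ε : ℝ) (hε : 0 < ε) :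
    ∃ δ : ℝ, 0 < δ ∧
      ∀ N : Set Z, N ⊆ Metric.closedBall (0 : Z) 1 →
        (∀ z ∈ Metric.closedBall (0 : Z) 1, ∃ y ∈ N, dist z y ≤ δ) →
        (∃ f : N → F, Isometry f) →
        ∃ T : Z →L[ℝ] F, Function.Injective T ∧
          ∀ z : Z, ‖z‖ ≤ ‖T z‖ ∧ ‖T z‖ ≤ (1 + ε) * ‖z‖ := by
  letI : MeasurableSpace Z := borel Z
  haveI : BorelSpace Z := ⟨rfl⟩
  obtain ⟨e, he⟩ : ∃ e, e = min ε 1 / 16 := ⟨_, rfl⟩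
  have he0 : 0 < e := he ▸ by positivity
  have he1 : e ≤ 1 / 16 := by have := min_le_right ε 1; linarith
  have he2 : e ≤ ε / 16 := by have := min_le_left ε 1; linarith
  obtain ⟨α, hα, hsm⟩ := smoothing_aux (Z := Z) (F := F) e he0
  obtain ⟨S, hS, hSn⟩ := smooth_net_aux (Z := Z) e he0
  obtain ⟨r, hr, hrS⟩ := smooth_radius_aux S hS (α / 2) (by positivity)
  obtain ⟨τ, hτ⟩ : ∃ τ, τ = min r (1 / 2) := ⟨_, rfl⟩
  have hτ0 : 0 < τ := hτ ▸ by positivity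
  have hτr : τ ≤ r := hτ ▸ min_le_left _ _
  have hτ2 : τ ≤ 1 / 2 := hτ ▸ min_le_right _ _
  refine ⟨α * τ / 16, by positivity, ?_⟩
  rintro N hN hnet ⟨f, hf⟩
  obtain ⟨G, hG⟩ := net_simple_aux (α * τ / 16) (by positivity) N hN hnet f hf
  have hGu : ∀ x ∈ closedBall (0 : Z) 1, ∀ x' ∈ closedBall (0 : Z) 1,
      ‖G x - G x'‖ ≤ ‖x - x'‖ + α * τ / 4 := fun x hx x' hx' => by
    have := (abs_le.1 (hG x hx x' hx')).2
    linarith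
  have hGl : ∀ x ∈ closedBall (0 : Z) 1, ∀ x' ∈ closedBall (0 : Z) 1,
      ‖x - x'‖ - α * τ / 4 ≤ ‖G x - G x'‖ := fun x hx x' hx' => by
    have := (abs_le.1 (hG x hx x' hx')).1
    linarith
  have hscale : ∀ x ∈ closedBall (0 : Z) 2, τ • x ∈ closedBall (0 : Z) 1 := by
    intro x hx
    rw [mem_closedBall_zero_iff] at hx ⊢
    rw [norm_smul, Real.norm_of_nonneg hτ0.le]
    nlinarith
  have m1 : StronglyMeasurable (fun x : Z => τ⁻¹ • (G (τ • x) - G 0)) := by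
    have h1 : StronglyMeasurable (fun x : Z => G (τ • x)) :=
      G.stronglyMeasurable.comp_measurable (measurable_const_smul τ)
    exact (h1.sub stronglyMeasurable_const).const_smul τ⁻¹
  have m2 : ∃ C, ∀ x : Z, ‖τ⁻¹ • (G (τ • x) - G 0)‖ ≤ C := by
    obtain ⟨C, hC⟩ := G.exists_forall_norm_le
    refine ⟨τ⁻¹ * (C + C), fun x => ?_⟩
    rw [norm_smul, Real.norm_of_nonneg (inv_nonneg.2 hτ0.le)]
    gcongr
    exact (norm_sub_le _ _).trans (add_le_add (hC _) (hC _))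
  obtain ⟨T, hTu, hTl⟩ := hsm (fun x => τ⁻¹ • (G (τ • x) - G 0)) m1 m2 (by simp) (by
    intro x hx x' hx'
    have h1 := hGu _ (hscale x hx) _ (hscale x' hx')
    rw [← smul_sub τ, norm_smul, Real.norm_of_nonneg hτ0.le] at h1
    rw [← smul_sub, sub_sub_sub_cancel_right, norm_smul, Real.norm_of_nonneg (inv_nonneg.2 hτ0.le),
      inv_mul_le_iff₀ hτ0]
    nlinarith [mul_pos hα hτ0])
  have hTS : ∀ z ∈ S, 1 - e ≤ ‖T z‖ := by
    intro z hz
    obtain ⟨p, hp1, hp⟩ := exists_dual_vector'' ℝ (G z - G (-z))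
    have hz1 := (hS z hz).1
    have hzB : z ∈ closedBall (0 : Z) 1 := by simp [hz1]
    have hzB' : -z ∈ closedBall (0 : Z) 1 := by simp [hz1]
    have hple : ∀ v : F, p v ≤ ‖v‖ := fun v => by
      refine (le_abs_self _).trans ((p.le_opNorm v).trans ?_)
      nlinarith [norm_nonneg v]
    have h2 : 2 - α * τ / 4 ≤ p (G z) - p (G (-z)) := by
      rw [← map_sub, hp]
      have := hGl z hzB (-z) hzB'
      rw [sub_neg_eq_add, ← two_smul ℝ z, norm_smul, hz1] at this
      norm_num at this ⊢
      linarith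
    have hmain := hTl p (fderiv ℝ (‖·‖) z) (τ⁻¹ * (p (G (-z)) + 1 - p (G 0))) ?_ z
    · rw [(hS z hz).2.fderiv_norm_self, hz1] at hmain
      have := (abs_le.1 hmain).1
      linarith [hple (T z)]
    · intro x hx
      have hx1 : ‖x‖ ≤ 1 := by simpa using hx
      have hn : ‖τ • x‖ ≤ τ := by
        rw [norm_smul, Real.norm_of_nonneg hτ0.le]; nlinarith
      have hB : τ • x ∈ closedBall (0 : Z) 1 := hscale x (by
        rw [mem_closedBall_zero_iff]; linarith)
      have k1 := hrS z hz (τ • x) (by linarith)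
      have k2 := hrS z hz (-(τ • x)) (by rw [norm_neg]; linarith)
      rw [norm_neg, map_neg] at k2
      have k3 := (hple _).trans (hGu z hzB _ hB)
      have k4 := (hple _).trans (hGu _ hB _ hzB')
      rw [map_sub] at k3 k4
      rw [sub_neg_eq_add, add_comm (τ • x)] at k4
      rw [sub_eq_add_neg z] at k3
      have k5 : α / 2 * ‖τ • x‖ ≤ α / 2 * τ := by gcongr
      rw [map_smul] at k1 k2
      simp only [smul_eq_mul] at k1 k2
      have k6 : p (τ⁻¹ • (G (τ • x) - G 0)) - τ⁻¹ * (p (G (-z)) + 1 - p (G 0))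
          - fderiv ℝ (‖·‖) z x
          = τ⁻¹ * (p (G (τ • x)) - p (G (-z)) - 1 - τ * fderiv ℝ (‖·‖) z x) := by
        rw [map_smul, map_sub, smul_eq_mul]
        field_simp
        ring
      rw [k6, abs_mul, abs_of_pos (inv_pos.2 hτ0), inv_mul_le_iff₀ hτ0, abs_le]
      constructor <;> nlinarith [mul_pos hα hτ0]
  have hlow1 : ∀ u : Z, ‖u‖ = 1 → 1 - 3 * e ≤ ‖T u‖ := by
    intro u hu
    obtain ⟨z, hz, huz⟩ := hSn u hu
    have h1 := hTS z hz
    have h2 := hTu (u - z)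
    rw [map_sub, norm_sub_rev] at h2
    have h3 := norm_sub_norm_le (T z) (T u)
    nlinarith
  have hlow : ∀ u : Z, (1 - 3 * e) * ‖u‖ ≤ ‖T u‖ := by
    intro u
    rcases eq_or_ne u 0 with rfl | hu
    · simp
    have hu' : 0 < ‖u‖ := norm_pos_iff.2 hu
    have := hlow1 (‖u‖⁻¹ • u) (by rw [norm_smul, norm_inv, norm_norm, inv_mul_cancel₀ hu'.ne'])
    rw [map_smul, norm_smul, norm_inv, norm_norm, le_inv_mul_iff₀ hu'] at this
    linarith
  have hpos : 0 < 1 - 3 * e := by linarith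
  have hb : ∀ z : Z, ‖z‖ ≤ ‖((1 - 3 * e)⁻¹ • T) z‖ ∧
      ‖((1 - 3 * e)⁻¹ • T) z‖ ≤ (1 + ε) * ‖z‖ := by
    intro z
    rw [ContinuousLinearMap.smul_apply, norm_smul, Real.norm_of_nonneg (inv_nonneg.2 hpos.le),
      le_inv_mul_iff₀ hpos, inv_mul_le_iff₀ hpos, ← mul_assoc]
    refine ⟨hlow z, (hTu z).trans ?_⟩
    gcongr
    nlinarith
  refine ⟨(1 - 3 * e)⁻¹ • T, ?_, hb⟩
  rw [injective_iff_map_eq_zero]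
  intro z hz
  have := (hb z).1
  rw [hz, norm_zero] at this
  exact norm_le_zero_iff.1 this
end
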